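/- arXiv:2604.22735 — 4 statements merged into one kernel-verified Lean document; each statement's English description precedes it below -/
import Mathlib

section
/- Let X(x₁, x₂, x₃, x₄, x₅) be the 3×3 real matrix with rows (x₁ + x₂ + 1, −x₁, −x₂), (−x₁, x₁ + x₃ + x₅, −x₃), (−x₂, −x₃, x₂ + x₃ + x₄). Then the Lebesgue integral over (x₁, …, x₅) ∈ (0, ∞)⁵ of the function 1/(det X(x₁, …, x₅))² is finite and equals 6 · ζ(3), where ζ(3) = ∑_{n ≥ 1} 1/n³. -/
open MeasureTheory

/-- The graph Laplacian of the wheel with three spokes in the affine chart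
where the sixth edge variable equals 1. -/
noncomputable def wheel3Matrix (x : Fin 5 → ℝ) : Matrix (Fin 3) (Fin 3) ℝ :=
  !![x 0 + x 1 + 1, -(x 0),         -(x 1);
     -(x 0),        x 0 + x 2 + x 4, -(x 2);
     -(x 1),        -(x 2),         x 1 + x 2 + x 3]

open Set Filter Topology
open scoped ENNReal

/-- Tonelli's theorem on a power, splitting off the first coordinate. -/
lemma lintegral_pi_fin_succ {n : ℕ} (μ : Measure ℝ) [SigmaFinite μ] {f : (Fin (n + 1) → ℝ) → ℝ≥0∞}
    (hf : Measurable f) :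
    ∫⁻ x, f x ∂Measure.pi (fun _ => μ) =
      ∫⁻ t, ∫⁻ y, f (Fin.cons t y) ∂Measure.pi (fun _ : Fin n => μ) ∂μ := by
  have h := (measurePreserving_piFinSuccAbove (fun _ : Fin (n + 1) => μ) 0).symm
  rw [← h.lintegral_comp hf]
  refine (lintegral_prod _ (hf.comp h.measurable).aemeasurable).trans ?_
  simp [MeasurableEquiv.piFinSuccAbove, Fin.insertNthEquiv]

/-- Tonelli's theorem for the fivefold power of a measure on the line. -/
lemma lintegral_pi_fin_five (μ : Measure ℝ) [SigmaFinite μ] {f : (Fin 5 → ℝ) → ℝ≥0∞}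
    (hf : Measurable f) :
    ∫⁻ x, f x ∂Measure.pi (fun _ => μ) =
      ∫⁻ a, ∫⁻ b, ∫⁻ c, ∫⁻ d, ∫⁻ e, f ![a, b, c, d, e] ∂μ ∂μ ∂μ ∂μ ∂μ := by
  have hcons : ∀ (n : ℕ) (t : ℝ), Measurable (fun y : Fin n → ℝ => (Fin.cons t y : Fin (n + 1) → ℝ)) :=
    fun n t => measurable_pi_iff.2 (Fin.cases (by simp) (fun i => by simpa using measurable_pi_apply i))
  rw [lintegral_pi_fin_succ μ hf]
  refine lintegral_congr fun a => ?_
  have ha := hf.comp (hcons 4 a)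
  refine (lintegral_pi_fin_succ μ ha).trans <| lintegral_congr fun b => ?_
  have hb := ha.comp (hcons 3 b)
  refine (lintegral_pi_fin_succ μ hb).trans <| lintegral_congr fun c => ?_
  have hc := hb.comp (hcons 2 c)
  refine (lintegral_pi_fin_succ μ hc).trans <| lintegral_congr fun d => ?_
  have hd := hc.comp (hcons 1 d)
  refine (lintegral_pi_fin_succ μ hd).trans <| lintegral_congr fun e => ?_
  rw [Measure.pi_of_empty, lintegral_dirac]
  rfl

/-- Moving the outermost of three integrations to the innermost position. -/
lemma lintegral_rotate (μ : Measure ℝ) [SFinite μ] {f : ℝ → ℝ → ℝ → ℝ≥0∞}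
    (hf : Measurable fun p : ℝ × ℝ × ℝ => f p.1 p.2.1 p.2.2) :
    ∫⁻ a, ∫⁻ b, ∫⁻ c, f a b c ∂μ ∂μ ∂μ = ∫⁻ b, ∫⁻ c, ∫⁻ a, f a b c ∂μ ∂μ ∂μ := by
  rw [lintegral_lintegral_swap]
  · refine lintegral_congr fun b => lintegral_lintegral_swap ?_
    exact (hf.comp (f := fun p : ℝ × ℝ => (p.1, b, p.2)) (by fun_prop)).aemeasurable
  · exact (hf.comp (f := fun p : (ℝ × ℝ) × ℝ => (p.1.1, p.1.2, p.2))
      (by fun_prop)).lintegral_prod_right'.aemeasurable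

lemma lintegral_Ioi_comp_mul_left {k : ℝ} (hk : 0 < k) (f : ℝ → ℝ≥0∞) :
    ∫⁻ x in Ioi 0, f x = ∫⁻ x in Ioi 0, ENNReal.ofReal k * f (k * x) := by
  have h := lintegral_image_eq_lintegral_abs_deriv_mul (s := Ioi (0 : ℝ)) (f := fun x => k * x)
    (f' := fun _ => k) measurableSet_Ioi
    (fun x _ => by simpa using ((hasDerivAt_id x).const_mul k).hasDerivWithinAt)
    ((mul_right_injective₀ hk.ne').injOn) f
  rwa [image_mul_left_Ioi hk, mul_zero, abs_of_pos hk] at h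

/-- The fundamental theorem of calculus on a half-line for the Lebesgue integral. -/
lemma lintegral_Ioi_ofReal_of_hasDerivAt {F f : ℝ → ℝ} {a l : ℝ}
    (hF : ∀ x ∈ Ici a, HasDerivAt F (f x) x) (hf : ∀ x ∈ Ioi a, 0 ≤ f x)
    (hl : Tendsto F atTop (𝓝 l)) :
    ∫⁻ x in Ioi a, ENNReal.ofReal (f x) = ENNReal.ofReal (l - F a) := by
  rw [← integral_Ioi_of_hasDerivAt_of_nonneg' hF hf hl, ofReal_integral_eq_lintegral_ofReal
    (integrableOn_Ioi_deriv_of_nonneg' hF hf hl) (ae_restrict_of_forall_mem measurableSet_Ioi hf)]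

/-- The fundamental theorem of calculus on a bounded interval for the Lebesgue integral. -/
lemma lintegral_Ioc_ofReal_of_hasDerivAt {F f : ℝ → ℝ} {a b : ℝ} (hab : a ≤ b)
    (hF : ∀ x ∈ Icc a b, HasDerivAt F (f x) x) (hf : ∀ x ∈ Icc a b, 0 ≤ f x)
    (hc : ContinuousOn f (Icc a b)) :
    ∫⁻ x in Ioc a b, ENNReal.ofReal (f x) = ENNReal.ofReal (F b - F a) := by
  have hi : IntervalIntegrable f volume a b := hc.intervalIntegrable_of_Icc hab
  rw [← intervalIntegral.integral_eq_sub_of_hasDerivAt (by rwa [uIcc_of_le hab]) hi,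
    intervalIntegral.integral_of_le hab, ofReal_integral_eq_lintegral_ofReal
      ((intervalIntegrable_iff_integrableOn_Ioc_of_le hab).1 hi)
      (ae_restrict_of_forall_mem measurableSet_Ioc fun x hx => hf x (Ioc_subset_Icc_self hx))]

lemma lintegral_Ioi_inv_linear_sq {A B : ℝ} (hA : 0 < A) (hB : 0 < B) :
    ∫⁻ x in Ioi 0, ENNReal.ofReal ((A * x + B)⁻¹ ^ 2) = ENNReal.ofReal (1 / (A * B)) := by
  rw [lintegral_Ioi_ofReal_of_hasDerivAt (F := fun x => -(A * (A * x + B))⁻¹) (l := 0)]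
  · congr 1
    simp
  · intro x (hx : 0 ≤ x)
    have h : A * x + B ≠ 0 := by positivity
    have h1 : HasDerivAt (fun x => A * (A * x + B)) (A * A) x := by
      simpa using (((hasDerivAt_id x).const_mul A).add_const B).const_mul A
    convert! (h1.inv (by positivity)).neg using 1
    field_simp
  · intro x _
    positivity
  · have h : Tendsto (fun x => A * (A * x + B)) atTop atTop :=
      (tendsto_atTop_add_const_right _ B (tendsto_id.const_mul_atTop hA)).const_mul_atTop hA
    simpa using h.inv_tendsto_atTop.neg

lemma lintegral_Ioi_inv_linear_mul_linear {α β γ δ : ℝ} (hα : 0 < α) (hβ : 0 < β) (hγ : 0 < γ)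
    (hδ : 0 < δ) (h : α * δ < β * γ) :
    ∫⁻ x in Ioi 0, ENNReal.ofReal (1 / ((α * x + β) * (γ * x + δ))) =
      ENNReal.ofReal (Real.log (β * γ / (α * δ)) / (β * γ - α * δ)) := by
  have hD : 0 < β * γ - α * δ := sub_pos.2 h
  rw [lintegral_Ioi_ofReal_of_hasDerivAt (l := Real.log (γ / α) / (β * γ - α * δ))
    (F := fun x => Real.log ((γ * x + δ) / (α * x + β)) / (β * γ - α * δ))]
  · congr 1
    simp only [mul_zero, zero_add]
    rw [← sub_div, ← Real.log_div (by positivity) (by positivity)]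
    congr 2
    field_simp
  · intro x (hx : 0 ≤ x)
    have h1 : HasDerivAt (fun x => γ * x + δ) γ x := by
      simpa using ((hasDerivAt_id x).const_mul γ).add_const δ
    have h2 : HasDerivAt (fun x => α * x + β) α x := by
      simpa using ((hasDerivAt_id x).const_mul α).add_const β
    have p1 : 0 < γ * x + δ := by positivity
    have p2 : 0 < α * x + β := by positivity
    have p3 : (γ * x + δ) / (α * x + β) ≠ 0 := by positivity
    convert! ((h1.div h2 p2.ne').log p3).div_const (β * γ - α * δ) using 1
    simp only [Pi.div_apply]
    field_simp
    ring
  · intro x (hx : 0 < x)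
    positivity
  · refine Tendsto.div_const (Tendsto.log ?_ (by positivity)) _
    have h1 : Tendsto (fun x : ℝ => (γ + δ * x⁻¹) / (α + β * x⁻¹)) atTop
        (𝓝 ((γ + δ * 0) / (α + β * 0))) :=
      ((tendsto_inv_atTop_zero.const_mul δ).const_add γ).div
        ((tendsto_inv_atTop_zero.const_mul β).const_add α) (by simpa using hα.ne')
    simp only [mul_zero, add_zero] at h1
    refine h1.congr' ?_
    filter_upwards [eventually_gt_atTop 0] with x hx
    field_simp

open Real in
/-- The integral of `y³ · eʸ / (eʸ - 1)²` expanded as a series in `e⁻ʸ`. -/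
lemma lintegral_pow_three_mul_exp_div_sq :
    ∫⁻ y in Ioi 0, ENNReal.ofReal (y ^ 3 * exp y / (exp y - 1) ^ 2) =
      ENNReal.ofReal (6 * ∑' n : ℕ, 1 / ((n : ℝ) + 1) ^ 3) := by
  have hsum : Summable fun n : ℕ => 1 / ((n : ℝ) + 1) ^ 3 := by
    simpa using (summable_nat_add_iff 1).2 (summable_one_div_nat_pow.2 (by norm_num : 1 < 3))
  have hexpand : ∀ y ∈ Ioi (0 : ℝ), ENNReal.ofReal (y ^ 3 * exp y / (exp y - 1) ^ 2) =
      ∑' n : ℕ, ENNReal.ofReal (y ^ 3 * (n * exp (-(n * y)))) := by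
    intro y (hy : 0 < y)
    have hr : ‖exp (-y)‖ < 1 := by simpa using hy
    have h := (hasSum_coe_mul_geometric_of_norm_lt_one hr).mul_left (y ^ 3)
    simp only [← exp_nat_mul, mul_neg] at h
    rw [← ENNReal.ofReal_tsum_of_nonneg (fun n => by positivity) h.summable, h.tsum_eq]
    have h1 : exp y - 1 ≠ 0 := by simpa [sub_eq_zero] using hy.ne'
    rw [exp_neg]
    congr 1
    field_simp
  have hterm : ∀ n : ℕ, ∫⁻ y in Ioi 0,
      ENNReal.ofReal (y ^ 3 * (((n + 1 : ℕ) : ℝ) * exp (-(((n + 1 : ℕ) : ℝ) * y)))) =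
        ENNReal.ofReal (6 * (1 / ((n : ℝ) + 1) ^ 3)) := by
    intro n
    set r : ℝ := ((n + 1 : ℕ) : ℝ) with hr
    have hr0 : 0 < r := by positivity
    have hI := integral_rpow_mul_exp_neg_mul_Ioi (a := 4) (by norm_num) hr0
    have hG : Gamma 4 = 6 := by
      rw [Gamma_ofNat_eq_factorial]
      norm_num [Nat.factorial]
    have hint : IntegrableOn (fun y : ℝ => y ^ ((4 : ℝ) - 1) * exp (-(r * y))) (Ioi 0) :=
      .of_integral_ne_zero (by rw [hI, hG]; positivity)
    norm_num only at hI hint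
    have hpow : ∀ y : ℝ, y ^ (3 : ℝ) = y ^ 3 := fun y => mod_cast rpow_natCast y 3
    simp only [hpow] at hI hint
    have : ∀ y : ℝ, y ^ 3 * (r * exp (-(r * y))) = r * (y ^ 3 * exp (-(r * y))) :=
      fun y => by ring
    simp only [this]
    rw [← ofReal_integral_eq_lintegral_ofReal (hint.const_mul r)
      (ae_restrict_of_forall_mem measurableSet_Ioi fun y (hy : 0 < y) => by positivity),
      integral_const_mul, hI, hG]
    congr 1
    have : (1 / r) ^ (4 : ℝ) = (1 / r) ^ 4 := mod_cast rpow_natCast (1 / r) 4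
    rw [this, show (n : ℝ) + 1 = r by simp [hr]]
    field_simp
  rw [setLIntegral_congr_fun measurableSet_Ioi hexpand,
    lintegral_tsum (fun n => by fun_prop), tsum_eq_zero_add' ENNReal.summable]
  simp only [hterm]
  rw [← ENNReal.ofReal_tsum_of_nonneg (fun n => by positivity) (hsum.mul_left 6), tsum_mul_left]
  simp

open Real in
lemma lintegral_log_one_add_pow_three_div_sq :
    ∫⁻ s in Ioi 0, ENNReal.ofReal (log (1 + s) ^ 3 / s ^ 2) =
      ENNReal.ofReal (6 * ∑' n : ℕ, 1 / ((n : ℝ) + 1) ^ 3) := by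
  have himage : (fun y => exp y - 1) '' Ioi 0 = Ioi 0 := by
    ext s
    constructor
    · rintro ⟨y, hy, rfl⟩
      simpa using hy
    · intro (hs : 0 < s)
      exact ⟨log (1 + s), log_pos (by linarith), by simp [exp_log (by linarith : 0 < 1 + s)]⟩
  have h := lintegral_image_eq_lintegral_abs_deriv_mul (s := Ioi (0 : ℝ)) (f := fun y => exp y - 1)
    (f' := exp) measurableSet_Ioi
    (fun x _ => ((hasDerivAt_exp x).sub_const 1).hasDerivWithinAt)
    (fun x _ y _ hxy => exp_injective (sub_left_injective hxy))
    (fun s => ENNReal.ofReal (log (1 + s) ^ 3 / s ^ 2))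
  rw [himage] at h
  rw [h, ← lintegral_pow_three_mul_exp_div_sq]
  refine lintegral_congr fun y => ?_
  rw [abs_exp, ← ENNReal.ofReal_mul (exp_pos y).le, add_sub_cancel, log_exp]
  congr 1
  ring

open Real in
lemma ofReal_log_one_add_eq_lintegral {s t : ℝ} (hs : 0 < s) (ht : 0 < t) :
    ENNReal.ofReal (log (1 + s ^ 2 * t / ((1 + t) ^ 2 * (1 + s))) / t) =
      ∫⁻ r in Ioc 0 s, ENNReal.ofReal
        (r * (2 + r) / (1 + r) * (1 / ((1 * t + (1 + r)) * ((1 + r) * t + 1)))) := by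
  rw [lintegral_Ioc_ofReal_of_hasDerivAt hs.le
    (F := fun r => log (1 + r ^ 2 * t / ((1 + t) ^ 2 * (1 + r))) / t)]
  · simp
  · intro r ⟨hr, _⟩
    have h1 : HasDerivAt (fun r : ℝ => r ^ 2 * t) (2 * r * t) r := by
      simpa using (hasDerivAt_pow 2 r).mul_const t
    have h2 : HasDerivAt (fun r : ℝ => (1 + t) ^ 2 * (1 + r)) ((1 + t) ^ 2) r := by
      simpa using ((hasDerivAt_id r).const_add 1).const_mul ((1 + t) ^ 2)
    have h3 : (1 + t) ^ 2 * (1 + r) ≠ 0 := by positivity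
    have h4 : 1 + r ^ 2 * t / ((1 + t) ^ 2 * (1 + r)) ≠ 0 := by positivity
    convert! (((h1.div h2 h3).const_add 1).log h4).div_const t using 1
    simp only [Pi.div_apply]
    have h5 : (1 + t) ^ 2 * (1 + r) + r ^ 2 * t ≠ 0 := by positivity
    field_simp
    ring
  · intro r ⟨hr, _⟩
    positivity
  · refine ContinuousOn.mul (ContinuousOn.div (by fun_prop) (by fun_prop) ?_)
      (ContinuousOn.div (by fun_prop) (by fun_prop) ?_) <;>
    · rintro r ⟨hr, _⟩
      positivity

open Real in
lemma lintegral_log_one_add_div {s : ℝ} (hs : 0 < s) :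
    ∫⁻ t in Ioi 0, ENNReal.ofReal (log (1 + s ^ 2 * t / ((1 + t) ^ 2 * (1 + s))) / t) =
      ENNReal.ofReal (log (1 + s) ^ 2) := by
  rw [setLIntegral_congr_fun measurableSet_Ioi fun t ht => ofReal_log_one_add_eq_lintegral hs ht,
    lintegral_lintegral_swap (by fun_prop)]
  have hinner : ∀ r ∈ Ioc 0 s, ∫⁻ t in Ioi 0, ENNReal.ofReal
      (r * (2 + r) / (1 + r) * (1 / ((1 * t + (1 + r)) * ((1 + r) * t + 1)))) =
        ENNReal.ofReal (2 * log (1 + r) / (1 + r)) := by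
    rintro r ⟨hr, _⟩
    have hc : 0 ≤ r * (2 + r) / (1 + r) := by positivity
    simp only [ENNReal.ofReal_mul hc]
    rw [lintegral_const_mul' _ _ ENNReal.ofReal_ne_top, lintegral_Ioi_inv_linear_mul_linear
      one_pos (by positivity) (by positivity) one_pos (by nlinarith), ← ENNReal.ofReal_mul hc]
    congr 1
    rw [one_mul, div_one, log_mul (by positivity) (by positivity)]
    rw [show (1 + r) * (1 + r) - 1 = r * (2 + r) by ring]
    field_simp
    ring
  rw [setLIntegral_congr_fun measurableSet_Ioc hinner, lintegral_Ioc_ofReal_of_hasDerivAt hs.le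
    (F := fun r => log (1 + r) ^ 2)]
  · simp
  · intro r ⟨hr, _⟩
    have h := (((hasDerivAt_id r).const_add 1).log (by simp; positivity)).pow 2
    convert! h using 1
    simp
    ring
  · intro r ⟨hr, _⟩
    have := log_nonneg (by linarith : 1 ≤ 1 + r)
    positivity
  · refine ContinuousOn.div (continuousOn_const.mul (ContinuousOn.log (by fun_prop) ?_))
      (by fun_prop) ?_ <;>
    · rintro r ⟨hr, _⟩
      positivity

lemma det_wheel3Matrix (a b c d e : ℝ) :
    (wheel3Matrix ![a, b, c, d, e]).det =
      ((1 + a + b) * d + (b + c + (a * b + c * (a + b)))) * e +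
        ((a + c + (a * b + c * (a + b))) * d + (a * b + c * (a + b))) := by
  simp [wheel3Matrix, Matrix.det_fin_three]
  ring

lemma measurable_inv_det_wheel3Matrix_sq : Measurable fun x => (wheel3Matrix x).det⁻¹ ^ 2 := by
  simp only [wheel3Matrix, Matrix.det_fin_three, Matrix.of_apply, Matrix.cons_val', Matrix.cons_val]
  fun_prop

/-- The two spoke variables integrate out to a logarithm divided by a square. -/
lemma lintegral_spokes_inv_det_sq {a b c : ℝ} (ha : 0 < a) (hb : 0 < b) (hc : 0 < c) :
    ∫⁻ d in Ioi 0, ∫⁻ e in Ioi 0, ENNReal.ofReal ((wheel3Matrix ![a, b, c, d, e]).det⁻¹ ^ 2) =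
      ENNReal.ofReal (Real.log ((b + c + (a * b + c * (a + b))) * (a + c + (a * b + c * (a + b))) /
        ((1 + a + b) * (a * b + c * (a + b)))) / (c + (a * b + c * (a + b))) ^ 2) := by
  have hsq : (b + c + (a * b + c * (a + b))) * (a + c + (a * b + c * (a + b))) -
      (1 + a + b) * (a * b + c * (a + b)) = (c + (a * b + c * (a + b))) ^ 2 := by ring
  rw [← hsq, ← lintegral_Ioi_inv_linear_mul_linear (by positivity) (by positivity) (by positivity)
    (by positivity) (sub_pos.1 (hsq ▸ by positivity))]
  refine setLIntegral_congr_fun measurableSet_Ioi fun d (hd : 0 < d) => ?_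
  simp only [det_wheel3Matrix]
  exact lintegral_Ioi_inv_linear_sq (by positivity) (by positivity)

/-- Rescaling the rim variables as `b = a τ` and `c = a b t / (1 + a + b)`. -/
lemma lintegral_rim_rescale {a : ℝ} (ha : 0 < a) :
    ∫⁻ b in Ioi 0, ∫⁻ c in Ioi 0, ENNReal.ofReal
      (Real.log ((b + c + (a * b + c * (a + b))) * (a + c + (a * b + c * (a + b))) /
        ((1 + a + b) * (a * b + c * (a + b)))) / (c + (a * b + c * (a + b))) ^ 2) =
    ∫⁻ τ in Ioi 0, ∫⁻ t in Ioi 0, ENNReal.ofReal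
      (Real.log ((1 + a * τ * (1 + t)) * (1 + a * (1 + t)) / (1 + a * (1 + τ) * (1 + t))) /
        (a * τ * (1 + a * (1 + τ)) * (1 + t) ^ 2)) := by
  rw [lintegral_Ioi_comp_mul_left ha]
  refine setLIntegral_congr_fun measurableSet_Ioi fun τ (hτ : 0 < τ) => ?_
  have hk : 0 < a * (a * τ) / (1 + a * (1 + τ)) := by positivity
  rw [lintegral_Ioi_comp_mul_left hk, ← lintegral_const_mul' _ _ ENNReal.ofReal_ne_top]
  refine setLIntegral_congr_fun measurableSet_Ioi fun t (ht : 0 < t) => ?_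
  rw [← ENNReal.ofReal_mul hk.le, ← ENNReal.ofReal_mul ha.le]
  generalize hcdef : a * (a * τ) / (1 + a * (1 + τ)) * t = c
  have e1 : a * τ + c + (a * (a * τ) + c * (a + a * τ)) = a * τ * (1 + a * (1 + t)) := by
    rw [← hcdef]; field_simp; ring
  have e2 : a + c + (a * (a * τ) + c * (a + a * τ)) = a * (1 + a * τ * (1 + t)) := by
    rw [← hcdef]; field_simp; ring
  have e3 : (1 + a + a * τ) * (a * (a * τ) + c * (a + a * τ)) =
      a * (a * τ) * (1 + a * (1 + τ) * (1 + t)) := by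
    rw [← hcdef]; field_simp; ring
  have e4 : c + (a * (a * τ) + c * (a + a * τ)) = a * (a * τ) * (1 + t) := by
    rw [← hcdef]; field_simp; ring
  rw [e1, e2, e3, e4]
  have e5 : a * τ * (1 + a * (1 + t)) * (a * (1 + a * τ * (1 + t))) /
      (a * (a * τ) * (1 + a * (1 + τ) * (1 + t))) =
      (1 + a * τ * (1 + t)) * (1 + a * (1 + t)) / (1 + a * (1 + τ) * (1 + t)) := by
    field_simp
  rw [e5]
  congr 1
  field_simp

/-- Rescaling `a = s / ((1 + τ) (1 + t))` separates the variables `τ` and `t`. -/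
lemma lintegral_rescale_separate {τ t : ℝ} (hτ : 0 < τ) (ht : 0 < t) :
    ∫⁻ a in Ioi 0, ENNReal.ofReal
      (Real.log ((1 + a * τ * (1 + t)) * (1 + a * (1 + t)) / (1 + a * (1 + τ) * (1 + t))) /
        (a * τ * (1 + a * (1 + τ)) * (1 + t) ^ 2)) =
    ∫⁻ s in Ioi 0, ENNReal.ofReal
      (Real.log (1 + s ^ 2 * τ / ((1 + τ) ^ 2 * (1 + s))) / τ / s *
        (1 / ((1 * t + 1) * (1 * t + (1 + s))))) := by
  have hk : 0 < 1 / ((1 + τ) * (1 + t)) := by positivity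
  rw [lintegral_Ioi_comp_mul_left hk]
  refine setLIntegral_congr_fun measurableSet_Ioi fun s (hs : 0 < s) => ?_
  rw [← ENNReal.ofReal_mul hk.le]
  have e : (1 + 1 / ((1 + τ) * (1 + t)) * s * τ * (1 + t)) *
      (1 + 1 / ((1 + τ) * (1 + t)) * s * (1 + t)) /
      (1 + 1 / ((1 + τ) * (1 + t)) * s * (1 + τ) * (1 + t)) =
      1 + s ^ 2 * τ / ((1 + τ) ^ 2 * (1 + s)) := by
    field_simp
    ring
  rw [e]
  congr 1
  field_simp
  ring

lemma lintegral_separated {s : ℝ} (hs : 0 < s) :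
    ∫⁻ τ in Ioi 0, ∫⁻ t in Ioi 0, ENNReal.ofReal
      (Real.log (1 + s ^ 2 * τ / ((1 + τ) ^ 2 * (1 + s))) / τ / s *
        (1 / ((1 * t + 1) * (1 * t + (1 + s))))) =
      ENNReal.ofReal (Real.log (1 + s) ^ 3 / s ^ 2) := by
  have hlog : 0 ≤ Real.log (1 + s) := Real.log_nonneg (by linarith)
  have hinner : ∀ τ ∈ Ioi (0 : ℝ), ∫⁻ t in Ioi 0, ENNReal.ofReal
      (Real.log (1 + s ^ 2 * τ / ((1 + τ) ^ 2 * (1 + s))) / τ / s *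
        (1 / ((1 * t + 1) * (1 * t + (1 + s))))) =
      ENNReal.ofReal (Real.log (1 + s) / s ^ 2) *
        ENNReal.ofReal (Real.log (1 + s ^ 2 * τ / ((1 + τ) ^ 2 * (1 + s))) / τ) := by
    intro τ (hτ : 0 < τ)
    have hc : 0 ≤ Real.log (1 + s ^ 2 * τ / ((1 + τ) ^ 2 * (1 + s))) / τ / s := by
      have : 0 ≤ s ^ 2 * τ / ((1 + τ) ^ 2 * (1 + s)) := by positivity
      have := Real.log_nonneg (le_add_of_nonneg_right this)
      positivity
    have hI := lintegral_Ioi_inv_linear_mul_linear (α := 1) (β := 1 + s) (γ := 1) (δ := 1)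
      one_pos (by positivity) one_pos one_pos (by linarith)
    simp only [mul_comm (1 * _ + 1 : ℝ), ENNReal.ofReal_mul hc]
    rw [lintegral_const_mul' _ _ ENNReal.ofReal_ne_top, hI, ← ENNReal.ofReal_mul hc,
      ← ENNReal.ofReal_mul (by positivity)]
    congr 1
    simp only [mul_one, div_one, add_sub_cancel_left]
    field_simp
  rw [setLIntegral_congr_fun measurableSet_Ioi hinner,
    lintegral_const_mul' _ _ ENNReal.ofReal_ne_top, lintegral_log_one_add_div hs,
    ← ENNReal.ofReal_mul (by positivity)]
  congr 1
  ring

lemma restrict_orthant_eq_pi :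
    (volume : Measure (Fin 5 → ℝ)).restrict {x | ∀ i, 0 < x i} =
      Measure.pi fun _ => volume.restrict (Ioi 0) := by
  rw [show {x : Fin 5 → ℝ | ∀ i, 0 < x i} = univ.pi fun _ => Ioi 0 by ext; simp, volume_pi,
    Measure.restrict_pi_pi]

lemma lintegral_inv_det_sq :
    ∫⁻ x in {x : Fin 5 → ℝ | ∀ i, 0 < x i}, ENNReal.ofReal ((wheel3Matrix x).det⁻¹ ^ 2) =
      ENNReal.ofReal (6 * ∑' n : ℕ, 1 / ((n : ℝ) + 1) ^ 3) := by
  rw [restrict_orthant_eq_pi, lintegral_pi_fin_five _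
    measurable_inv_det_wheel3Matrix_sq.ennreal_ofReal]
  have hspokes : ∀ a ∈ Ioi (0 : ℝ), ∫⁻ b in Ioi 0, ∫⁻ c in Ioi 0, ∫⁻ d in Ioi 0, ∫⁻ e in Ioi 0,
      ENNReal.ofReal ((wheel3Matrix ![a, b, c, d, e]).det⁻¹ ^ 2) = _ := fun a ha =>
    (setLIntegral_congr_fun measurableSet_Ioi fun b hb =>
      setLIntegral_congr_fun measurableSet_Ioi fun c hc =>
        lintegral_spokes_inv_det_sq ha hb hc).trans (lintegral_rim_rescale ha)
  have hseparate := fun (τ : ℝ) (hτ : τ ∈ Ioi 0) =>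
    setLIntegral_congr_fun (μ := volume) measurableSet_Ioi fun (t : ℝ) (ht : t ∈ Ioi 0) =>
      lintegral_rescale_separate hτ ht
  rw [setLIntegral_congr_fun measurableSet_Ioi hspokes, lintegral_rotate _ (by fun_prop),
    setLIntegral_congr_fun measurableSet_Ioi hseparate, ← lintegral_rotate _ (by fun_prop),
    setLIntegral_congr_fun measurableSet_Ioi fun s hs => lintegral_separated hs,
    lintegral_log_one_add_pow_three_div_sq]

/-- The integral of `1/det(X)²` over the positive orthant `(0,∞)⁵` is finite
and equals `6·ζ(3)`. -/
theorem integral_inv_det_sq_eq_six_zeta_three :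
    IntegrableOn (fun x : Fin 5 → ℝ => ((wheel3Matrix x).det)⁻¹ ^ 2)
      {x | ∀ i, 0 < x i} ∧
    ∫ x in {x : Fin 5 → ℝ | ∀ i, 0 < x i}, ((wheel3Matrix x).det)⁻¹ ^ 2 =
      6 * ∑' n : ℕ, 1 / ((n : ℝ) + 1) ^ 3 := by
  have hmeas := measurable_inv_det_wheel3Matrix_sq
  constructor
  · refine ⟨hmeas.aestronglyMeasurable, ?_⟩
    rw [hasFiniteIntegral_iff_ofReal (ae_of_all _ fun x => by positivity)]
    exact lintegral_inv_det_sq ▸ ENNReal.ofReal_lt_top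
  · rw [integral_eq_lintegral_of_nonneg_ae (ae_of_all _ fun x => by positivity)
      hmeas.aestronglyMeasurable, lintegral_inv_det_sq, ENNReal.toReal_ofReal]
    exact mul_nonneg (by norm_num) (tsum_nonneg fun n => by positivity)
end

section
/- Let G be a finite connected simple graph with Kirchhoff graph polynomial Ψ_G, and let x : E(G) → ℝ satisfy x(e) ≥ 0 for every edge e. Then Ψ_G(x) ≥ 0, and Ψ_G(x) = 0 if and only if the simple graph on the same vertex type whose edge set is {e ∈ E(G) : x(e) = 0} is not acyclic, i.e. if and only if the set of edges on which x vanishes contains a cycle of G. -/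
open scoped Classical

/-- The Kirchhoff graph polynomial: the sum over spanning trees `T` of `G` of the
product of `x e` over all edges `e` of `G` not in `T`. -/
noncomputable def kirchhoff {V : Type*} [Fintype V] (G : SimpleGraph V)
    (x : G.edgeSet → ℝ) : ℝ :=
  ∑ T ∈ Finset.univ.filter (fun T : SimpleGraph V => T ≤ G ∧ T.IsTree),
    ∏ e : G.edgeSet, if (e : Sym2 V) ∈ T.edgeSet then 1 else x e

/-- For a nonnegative weight `x`, every spanning tree term of the Kirchhoff polynomial
is nonnegative. -/
theorem kirchhoff_term_nonneg {V : Type*} [Fintype V] {G : SimpleGraph V}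
    {x : G.edgeSet → ℝ} (hx : ∀ e, 0 ≤ x e) (T : SimpleGraph V) :
    0 ≤ ∏ e : G.edgeSet, if (e : Sym2 V) ∈ T.edgeSet then 1 else x e :=
  Finset.prod_nonneg fun e _ => by split_ifs <;> simp [hx]

/-- The spanning tree term of `T` is nonzero exactly when `T` contains every edge on which
`x` vanishes. -/
theorem kirchhoff_term_ne_zero_iff {V : Type*} [Fintype V] {G : SimpleGraph V}
    {x : G.edgeSet → ℝ} (T : SimpleGraph V) :
    (∏ e : G.edgeSet, if (e : Sym2 V) ∈ T.edgeSet then 1 else x e) ≠ 0 ↔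
      SimpleGraph.fromEdgeSet (Subtype.val '' {e : G.edgeSet | x e = 0}) ≤ T := by
  rw [Finset.prod_ne_zero_iff]
  constructor
  · intro h u v huv
    obtain ⟨⟨e, he, hev⟩, -⟩ := (SimpleGraph.fromEdgeSet_adj _).1 huv
    by_contra hT
    refine h e (Finset.mem_univ e) ?_
    rw [if_neg (by rwa [hev]), he]
  · rintro h ⟨e, he⟩ - h0
    split_ifs at h0 with hT
    · exact one_ne_zero h0
    · induction e with
      | _ u v =>
        exact hT (h ((SimpleGraph.fromEdgeSet_adj _).2
          ⟨⟨⟨s(u, v), he⟩, h0, rfl⟩, SimpleGraph.Adj.ne he⟩))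

/-- For a finite connected simple graph `G` and nonnegative `x : E(G) → ℝ`, the
Kirchhoff polynomial satisfies `Ψ_G(x) ≥ 0`, and `Ψ_G(x) = 0` if and only if the
simple graph on `V` whose edge set is `{e ∈ E(G) : x e = 0}` is not acyclic. -/
theorem kirchhoff_nonneg_and_eq_zero_iff {V : Type*} [Fintype V]
    (G : SimpleGraph V) (hG : G.Connected)
    (x : G.edgeSet → ℝ) (hx : ∀ e, 0 ≤ x e) :
    0 ≤ kirchhoff G x ∧
      (kirchhoff G x = 0 ↔
        ¬ (SimpleGraph.fromEdgeSet
            (Subtype.val '' {e : G.edgeSet | x e = 0})).IsAcyclic) := by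
  refine ⟨Finset.sum_nonneg fun T _ => kirchhoff_term_nonneg hx T, ?_⟩
  rw [← not_iff_not, not_not, kirchhoff,
    Finset.sum_eq_zero_iff_of_nonneg fun T _ => kirchhoff_term_nonneg hx T]
  push Not
  simp only [Finset.mem_filter_univ, kirchhoff_term_ne_zero_iff]
  constructor
  · rintro ⟨T, ⟨-, hT⟩, hle⟩
    exact hT.isAcyclic.anti hle
  · intro hF
    have hle : SimpleGraph.fromEdgeSet (Subtype.val '' {e : G.edgeSet | x e = 0}) ≤ G := by
      intro u v huv
      obtain ⟨⟨e, -, hev⟩, -⟩ := (SimpleGraph.fromEdgeSet_adj _).1 huv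
      rw [← SimpleGraph.mem_edgeSet, ← hev]
      exact e.2
    obtain ⟨T, hFT, hTG, hT⟩ := hG.exists_isTree_le_of_le_of_isAcyclic hle hF
    exact ⟨T, ⟨hTG, hT⟩, hFT⟩
end

section
/- Let G be a finite connected simple graph with nonempty edge set E(G) satisfying |E(G)| = 2(|E(G)| − |V| + 1), and fix an edge e₀ ∈ E(G). For a nonempty subset F ⊆ E(G), let V_F be the set of endpoints of edges in F, let c_F be the number of connected components of the simple graph with vertex set V_F and edge set F, and set h_F = |F| − |V_F| + c_F. Then the function u ↦ Ψ_G(x_u)⁻² is Lebesgue integrable on the positive orthant of functions u : E(G) \ {e₀} → (0, ∞) (i.e. the Feynman residue of G is finite) if and only if every nonempty proper subset F ⊊ E(G) satisfies |F| > 2 · h_F. -/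
open MeasureTheory
open scoped Classical

/-- The affine chart `x(e₀) = 1`: extend `u : E \ {e₀} → ℝ` to `E → ℝ` by
sending `e₀` to `1`. -/
noncomputable def chart {V : Type*} [Fintype V] (G : SimpleGraph V) (e₀ : G.edgeSet)
    (u : {e : G.edgeSet // e ≠ e₀} → ℝ) : G.edgeSet → ℝ :=
  fun e => if h : e = e₀ then 1 else u ⟨e, h⟩

/-- The set of endpoints of the edges in `F`. -/
def edgeVerts {V : Type*} [Fintype V] (G : SimpleGraph V)
    (F : Finset G.edgeSet) : Set V :=
  {v | ∃ e ∈ F, v ∈ (e : Sym2 V)}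

/-- The simple graph on `V` whose edges are the edges in `F`. -/
def edgeGraph {V : Type*} [Fintype V] (G : SimpleGraph V)
    (F : Finset G.edgeSet) : SimpleGraph V :=
  SimpleGraph.fromEdgeSet (Subtype.val '' (F : Set G.edgeSet))

/-- The loop number `h_F = |F| − |V_F| + c_F` of the subgraph spanned by the
edge subset `F`, where `V_F` is the set of endpoints of edges of `F` and `c_F`
is the number of connected components of the graph `(V_F, F)`. -/
noncomputable def subLoopNumber {V : Type*} [Fintype V] (G : SimpleGraph V)
    (F : Finset G.edgeSet) : ℤ :=
  (F.card : ℤ) - Nat.card (edgeVerts G F) +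
    Nat.card ((edgeGraph G F).induce (edgeVerts G F)).ConnectedComponent

namespace SimpleGraph

/-- A forest with `c` connected components on `n` vertices has `n - c` edges. -/
theorem IsAcyclic.card_edgeSet_add_card_connectedComponent {W : Type*} [Fintype W]
    {T : SimpleGraph W} (hT : T.IsAcyclic) :
    Nat.card T.edgeSet + Nat.card T.ConnectedComponent = Nat.card W := by
  have hcomp : ∀ c : T.ConnectedComponent,
      ∑ v with T.connectedComponentMk v = c, T.degree v + 2 =
        2 * ∑ v with T.connectedComponentMk v = c, 1 := by
    intro c
    have hsub : ∀ f : W → ℕ, ∑ v with T.connectedComponentMk v = c, f v = ∑ v : c, f v := fun f =>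
      Finset.sum_subtype _ (fun v => by rw [Finset.mem_filter_univ]; exact (c.mem_supp_iff v).symm) f
    have h1 := (hT.isTree_connectedComponent c).card_edgeFinset
    have h2 := c.toSimpleGraph.sum_degrees_eq_twice_card_edges
    have h3 : ∀ v : c, T.degree v = c.toSimpleGraph.degree v := fun v => by
      have := degree_induce_of_neighborSet_subset (v := (⟨v, v.2⟩ : c.supp)) (G := T)
        fun w hw => c.mem_supp_of_adj_mem_supp v.2 hw
      rw [← this]
      congr!
    rw [hsub, hsub, Finset.sum_congr rfl fun v _ => h3 v, h2]
    simp only [Finset.sum_const, Finset.card_univ, smul_eq_mul, mul_one]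
    rw [← Nat.card_eq_fintype_card] at h1 ⊢
    omega
  have hfib : ∀ f : W → ℕ,
      ∑ c, ∑ v with T.connectedComponentMk v = c, f v = ∑ v, f v := fun f => by
    convert Finset.sum_fiberwise Finset.univ T.connectedComponentMk f
  have hsum := Finset.sum_congr (Eq.refl (Finset.univ : Finset T.ConnectedComponent))
    fun c _ => hcomp c
  rw [Finset.sum_add_distrib, ← Finset.mul_sum, hfib, hfib,
    T.sum_degrees_eq_twice_card_edges] at hsum
  simp only [Finset.sum_const, Finset.card_univ, smul_eq_mul, mul_one] at hsum
  simp only [Nat.card_eq_fintype_card]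
  rw [← edgeFinset_card]
  omega

/-- Reachability passes to the graph induced on a set containing the support. -/
theorem Reachable.induce_of_support_subset {W : Type*} {H : SimpleGraph W} {A : Set W}
    (hA : H.support ⊆ A) {u v : W} (h : H.Reachable u v) (hu : u ∈ A) (hv : v ∈ A) :
    (H.induce A).Reachable ⟨u, hu⟩ ⟨v, hv⟩ := by
  obtain ⟨p⟩ := h
  induction p with
  | nil => exact Reachable.refl _
  | cons hadj p ih =>
    have hw := hA (H.mem_support.2 ⟨_, hadj.symm⟩)
    exact (Adj.reachable (by simpa using hadj : (H.induce A).Adj ⟨_, hu⟩ ⟨_, hw⟩)).trans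
      (ih hw hv)

end SimpleGraph

section Graph

variable {V : Type*} [Fintype V] (G : SimpleGraph V)

theorem edgeGraph_adj {F : Finset G.edgeSet} {u v : V} :
    (edgeGraph G F).Adj u v ↔ ∃ h : s(u, v) ∈ G.edgeSet, (⟨s(u, v), h⟩ : G.edgeSet) ∈ F := by
  rw [edgeGraph, SimpleGraph.fromEdgeSet_adj]
  constructor
  · rintro ⟨⟨e, he, h⟩, -⟩
    refine ⟨h ▸ e.2, ?_⟩
    have : (⟨s(u, v), h ▸ e.2⟩ : G.edgeSet) = e := Subtype.ext h.symm
    rw [this]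
    exact he
  · rintro ⟨h, hF⟩
    exact ⟨⟨_, hF, rfl⟩, (SimpleGraph.mem_edgeSet G).1 h |>.ne⟩

theorem mem_edgeSet_edgeGraph {F : Finset G.edgeSet} (e : G.edgeSet) :
    (e : Sym2 V) ∈ (edgeGraph G F).edgeSet ↔ e ∈ F := by
  obtain ⟨e, he⟩ := e
  induction e with
  | _ u v =>
    rw [SimpleGraph.mem_edgeSet, edgeGraph_adj]
    exact ⟨fun ⟨_, h⟩ => h, fun h => ⟨he, h⟩⟩

theorem edgeGraph_mono {F F' : Finset G.edgeSet} (h : F ⊆ F') :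
    edgeGraph G F ≤ edgeGraph G F' := by
  intro u v
  rw [edgeGraph_adj, edgeGraph_adj]
  exact fun ⟨h1, h2⟩ => ⟨h1, h h2⟩

theorem edgeGraph_le (F : Finset G.edgeSet) : edgeGraph G F ≤ G := by
  intro u v h
  exact ((edgeGraph_adj G).1 h).1

theorem edgeGraph_univ : edgeGraph G Finset.univ = G :=
  le_antisymm (edgeGraph_le G _) fun _ _ h => (edgeGraph_adj G).2 ⟨h, Finset.mem_univ _⟩

theorem support_edgeGraph_subset (F : Finset G.edgeSet) :
    (edgeGraph G F).support ⊆ edgeVerts G F := by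
  rintro u ⟨v, h⟩
  obtain ⟨h1, h2⟩ := (edgeGraph_adj G).1 h
  exact ⟨_, h2, Sym2.mem_mk_left u v⟩

theorem card_edgeSet_eq_card_filter {F : Finset G.edgeSet} {T : SimpleGraph V}
    (hT : T ≤ edgeGraph G F) :
    Nat.card T.edgeSet = (F.filter fun e : G.edgeSet => (e : Sym2 V) ∈ T.edgeSet).card := by
  rw [← Fintype.card_coe, ← Nat.card_eq_fintype_card]
  have hle := hT.trans (edgeGraph_le G F)
  refine Nat.card_congr
    { toFun := fun e => ⟨⟨e.1, SimpleGraph.edgeSet_mono hle e.2⟩, ?_⟩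
      invFun := fun e => ⟨e.1.1, (Finset.mem_filter.1 e.2).2⟩
      left_inv := fun _ => rfl
      right_inv := fun _ => rfl }
  exact Finset.mem_filter.2
    ⟨(mem_edgeSet_edgeGraph G _).1 (SimpleGraph.edgeSet_mono hT e.2), e.2⟩

/-- A forest inside `edgeGraph G F` leaves out at least `h_F` edges of `F`. -/
theorem subLoopNumber_le_of_isAcyclic {F : Finset G.edgeSet} {T : SimpleGraph V}
    (hT : T ≤ edgeGraph G F) (hac : T.IsAcyclic) :
    subLoopNumber G F ≤ (F.card : ℤ) - Nat.card T.edgeSet := by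
  have h1 := (hac.induce (edgeVerts G F)).card_edgeSet_add_card_connectedComponent
  have h2 := SimpleGraph.card_edgeFinset_induce_of_support_subset
    ((SimpleGraph.support_mono hT).trans (support_edgeGraph_subset G F))
  have h3 := SimpleGraph.ConnectedComponent.card_le_card_of_le
    (SimpleGraph.comap_monotone (Function.Embedding.subtype (· ∈ edgeVerts G F)) hT)
  rw [SimpleGraph.edgeFinset_card, SimpleGraph.edgeFinset_card, ← Nat.card_eq_fintype_card,
    ← Nat.card_eq_fintype_card] at h2
  rw [subLoopNumber]
  change Nat.card ((edgeGraph G F).induce (edgeVerts G F)).ConnectedComponent ≤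
    Nat.card (T.induce (edgeVerts G F)).ConnectedComponent at h3
  omega

/-- A spanning forest of `edgeGraph G F` leaves out exactly `h_F` edges of `F`. -/
theorem subLoopNumber_eq_of_reachable_eq {F : Finset G.edgeSet} {T : SimpleGraph V}
    (hT : T ≤ edgeGraph G F) (hac : T.IsAcyclic)
    (hr : T.Reachable = (edgeGraph G F).Reachable) :
    subLoopNumber G F = (F.card : ℤ) - Nat.card T.edgeSet := by
  have h1 := (hac.induce (edgeVerts G F)).card_edgeSet_add_card_connectedComponent
  have hs := (SimpleGraph.support_mono hT).trans (support_edgeGraph_subset G F)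
  have h2 := SimpleGraph.card_edgeFinset_induce_of_support_subset hs
  have h3 : ((edgeGraph G F).induce (edgeVerts G F)).Reachable =
      (T.induce (edgeVerts G F)).Reachable := by
    ext u v
    refine ⟨fun h => ?_, fun h =>
      h.mono (SimpleGraph.comap_monotone (Function.Embedding.subtype (· ∈ edgeVerts G F)) hT)⟩
    refine SimpleGraph.Reachable.induce_of_support_subset hs ?_ u.2 v.2
    rw [hr]
    exact h.map (SimpleGraph.Embedding.induce (edgeVerts G F)).toHom
  rw [SimpleGraph.edgeFinset_card, SimpleGraph.edgeFinset_card, ← Nat.card_eq_fintype_card,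
    ← Nat.card_eq_fintype_card] at h2
  have h4 : Nat.card ((edgeGraph G F).induce (edgeVerts G F)).ConnectedComponent =
      Nat.card (T.induce (edgeVerts G F)).ConnectedComponent :=
    congrArg (fun r => Nat.card (Quot r)) h3
  rw [subLoopNumber]
  omega

/-- Every spanning tree leaves out at least `h_F` edges of `F`. -/
theorem subLoopNumber_le_card_filter {T : SimpleGraph V} (hT : T.IsTree)
    (F : Finset G.edgeSet) :
    subLoopNumber G F ≤ ((F.filter fun e : G.edgeSet => (e : Sym2 V) ∉ T.edgeSet).card : ℤ) := by
  have h1 := subLoopNumber_le_of_isAcyclic G (T := T ⊓ edgeGraph G F) inf_le_right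
    (hT.isAcyclic.anti inf_le_left)
  have h2 : Nat.card (T ⊓ edgeGraph G F).edgeSet =
      (F.filter fun e : G.edgeSet => (e : Sym2 V) ∈ T.edgeSet).card := by
    rw [card_edgeSet_eq_card_filter G inf_le_right]
    congr 1
    ext e
    simp only [Finset.mem_filter, SimpleGraph.edgeSet_inf, Set.mem_inter_iff,
      mem_edgeSet_edgeGraph]
    tauto
  have h3 := Finset.card_filter_add_card_filter_not (s := F)
    fun e : G.edgeSet => (e : Sym2 V) ∈ T.edgeSet
  omega

/-- A spanning tree leaves out `|E| - |V| + 1` edges. -/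
theorem card_filter_notMem_of_isTree {T : SimpleGraph V} (hTG : T ≤ G) (hT : T.IsTree) :
    ((Finset.univ.filter fun e : G.edgeSet => (e : Sym2 V) ∉ T.edgeSet).card : ℤ) =
      Fintype.card G.edgeSet - Fintype.card V + 1 := by
  have h1 := card_edgeSet_eq_card_filter G (F := Finset.univ) (T := T) (by rwa [edgeGraph_univ])
  have h2 := hT.card_edgeFinset
  rw [SimpleGraph.edgeFinset_card, ← Nat.card_eq_fintype_card] at h2
  have h3 := Finset.card_filter_add_card_filter_not (s := (Finset.univ : Finset G.edgeSet))
    fun e : G.edgeSet => (e : Sym2 V) ∈ T.edgeSet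
  rw [Finset.card_univ] at h3
  omega

/-- Greedy construction of a spanning forest that is optimal for every dominated weight. -/
theorem exists_greedy_forest (y p : G.edgeSet → ℝ)
    (hp : ∀ F, (subLoopNumber G F : ℝ) ≤ ∑ e ∈ F, p e) (S : Finset G.edgeSet) :
    ∃ T : SimpleGraph V, T ≤ edgeGraph G S ∧ T.IsAcyclic ∧
      T.Reachable = (edgeGraph G S).Reachable ∧
      ∀ M, (∀ e ∈ S, y e ≤ M) →
        ∑ e ∈ S, ((if (e : Sym2 V) ∈ T.edgeSet then 0 else 1) - p e) * (M - y e) ≤ 0 := by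
  induction S using Finset.induction_on_max_value y with
  | empty =>
    obtain ⟨T, h1, h2, h3⟩ := (edgeGraph G ∅).exists_isAcyclic_reachable_eq_le
    exact ⟨T, h1, h2, h3, by simp⟩
  | insert a S ha hmax ih =>
    obtain ⟨T, h1, h2, -, h4⟩ := ih
    obtain ⟨T', k1, k2, k3, k4⟩ :=
      SimpleGraph.exists_isAcyclic_reachable_eq_le_of_le_of_isAcyclic
        (h1.trans (edgeGraph_mono G (Finset.subset_insert a S))) h2
    refine ⟨T', k2, k3, k4, fun M hM => ?_⟩
    have hsplit : ∀ c : G.edgeSet → ℝ, ∑ e ∈ insert a S, c e * (M - y e) =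
        (∑ e ∈ insert a S, c e) * (M - y a) + ∑ e ∈ S, c e * (y a - y e) := by
      intro c
      rw [Finset.sum_insert ha, Finset.sum_insert ha, add_mul, Finset.sum_mul, add_assoc,
        ← Finset.sum_add_distrib]
      congr 1
      exact Finset.sum_congr rfl fun e _ => by ring
    rw [hsplit]
    have hA : ∑ e ∈ insert a S, ((if (e : Sym2 V) ∈ T'.edgeSet then (0 : ℝ) else 1) - p e) ≤ 0 := by
      have e1 := subLoopNumber_eq_of_reachable_eq G k2 k3 k4
      rw [card_edgeSet_eq_card_filter G k2] at e1
      have e2 := hp (insert a S)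
      have e3 := Finset.card_filter_add_card_filter_not (s := insert a S)
        fun e : G.edgeSet => (e : Sym2 V) ∈ T'.edgeSet
      rw [Finset.sum_sub_distrib, Finset.sum_ite, Finset.sum_const_zero, zero_add,
        Finset.sum_const, nsmul_eq_mul, mul_one]
      have e4 : ((subLoopNumber G (insert a S) : ℤ) : ℝ) =
          (((insert a S).filter fun e : G.edgeSet => (e : Sym2 V) ∉ T'.edgeSet).card : ℝ) := by
        have : subLoopNumber G (insert a S) =
          (((insert a S).filter fun e : G.edgeSet => (e : Sym2 V) ∉ T'.edgeSet).card : ℤ) := by omega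
        rw [this]; simp
      linarith
    have hB : ∑ e ∈ S, ((if (e : Sym2 V) ∈ T'.edgeSet then (0 : ℝ) else 1) - p e) * (y a - y e) ≤
        0 := by
      refine le_trans (Finset.sum_le_sum fun e he => ?_) (h4 (y a) hmax)
      refine mul_le_mul_of_nonneg_right ?_ (sub_nonneg.2 (hmax e he))
      have : (e : Sym2 V) ∈ T.edgeSet → (e : Sym2 V) ∈ T'.edgeSet :=
        fun h => SimpleGraph.edgeSet_mono k1 h
      split_ifs <;> first | tauto | linarith
    have hC := hM a (Finset.mem_insert_self a S)
    nlinarith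

/-- If `p` lies in the Newton polytope of the Kirchhoff polynomial, then some spanning tree
monomial dominates the monomial with exponent `p`. -/
theorem exists_isTree_sum_le (hG : G.Connected) (y p : G.edgeSet → ℝ)
    (hp : ∀ F, (subLoopNumber G F : ℝ) ≤ ∑ e ∈ F, p e)
    (hp_univ : ∑ e, p e = Fintype.card G.edgeSet - Fintype.card V + 1) :
    ∃ T : SimpleGraph V, T ≤ G ∧ T.IsTree ∧
      ∑ e, p e * y e ≤ ∑ e : G.edgeSet, (if (e : Sym2 V) ∈ T.edgeSet then 0 else y e) := by
  obtain ⟨T, h1, h2, h3, h4⟩ := exists_greedy_forest G y p hp Finset.univ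
  rw [edgeGraph_univ] at h1 h3
  have := hG.nonempty
  have hT : T.IsTree := ⟨⟨fun u v => by rw [h3]; exact hG.preconnected u v⟩, h2⟩
  refine ⟨T, h1, hT, ?_⟩
  obtain ⟨M, hM⟩ := (Set.finite_range y).bddAbove
  have h5 := h4 M fun e _ => hM ⟨e, rfl⟩
  have h6 : ∑ e : G.edgeSet, (if (e : Sym2 V) ∈ T.edgeSet then (0 : ℝ) else 1) =
      Fintype.card G.edgeSet - Fintype.card V + 1 := by
    rw [Finset.sum_ite, Finset.sum_const_zero, zero_add, Finset.sum_const, nsmul_eq_mul, mul_one]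
    exact_mod_cast card_filter_notMem_of_isTree G h1 hT
  have h7 : ∑ e : G.edgeSet, ((if (e : Sym2 V) ∈ T.edgeSet then (0 : ℝ) else 1) - p e) *
      (M - y e) = (∑ e : G.edgeSet, (if (e : Sym2 V) ∈ T.edgeSet then (0 : ℝ) else 1) -
        ∑ e, p e) * M - ∑ e : G.edgeSet, (if (e : Sym2 V) ∈ T.edgeSet then 0 else y e) +
        ∑ e, p e * y e := by
    rw [← Finset.sum_sub_distrib, Finset.sum_mul, ← Finset.sum_sub_distrib,
      ← Finset.sum_add_distrib]
    refine Finset.sum_congr rfl fun e _ => ?_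
    split_ifs <;> ring
  rw [h7, h6, hp_univ] at h5
  linarith

end Graph

theorem prod_two_zpow {ι : Type*} (s : Finset ι) (w : ι → ℤ) (k : ℤ) :
    ∏ e ∈ s, (2 : ℝ) ^ (k * w e) = 2 ^ (k * ∑ e ∈ s, w e) := by
  induction s using Finset.induction_on with
  | empty => simp
  | insert a s ha ih =>
    rw [Finset.prod_insert ha, ih, Finset.sum_insert ha, mul_add, zpow_add₀ two_ne_zero]

theorem integrableOn_min_rpow {ε : ℝ} (hε : 0 < ε) :
    IntegrableOn (fun t : ℝ => (t ^ (if t ≤ 1 then 1 / 2 - ε else 1 / 2 + ε))⁻¹ ^ 2)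
      (Set.Ioi 0) := by
  have key : ∀ (t q : ℝ), 0 < t → (t ^ q)⁻¹ ^ 2 = t ^ (-(2 * q)) := fun t q ht => by
    rw [Real.rpow_neg ht.le, inv_pow, mul_comm, Real.rpow_mul ht.le, Real.rpow_two]
  rw [← Set.Ioc_union_Ioi_eq_Ioi zero_le_one, integrableOn_union]
  constructor
  · have h := (intervalIntegral.intervalIntegrable_rpow' (a := 0) (b := 1)
      (r := -(2 * (1 / 2 - ε))) (by linarith)).1
    refine h.congr_fun (fun t ht => ?_) measurableSet_Ioc
    simp only
    rw [if_pos ht.2, key t _ ht.1]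
  · have h := integrableOn_Ioi_rpow_of_lt (a := -(2 * (1 / 2 + ε))) (by linarith) zero_lt_one
    refine h.congr_fun (fun t ht => ?_) measurableSet_Ioi
    simp only
    rw [if_neg (not_le.2 ht), key t _ (zero_lt_one.trans ht)]

/-- The weight along which the chart `x(e₀) = 1` approaches the face of the Newton polytope
determined by `F`. -/
noncomputable def faceWeight {V : Type*} (G : SimpleGraph V) (e₀ : G.edgeSet)
    (F : Finset G.edgeSet) (e : G.edgeSet) : ℤ :=
  (if e ∈ F then 0 else 1) - if e₀ ∈ F then 0 else 1

theorem sum_faceWeight {V : Type*} (G : SimpleGraph V) (e₀ : G.edgeSet)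
    (F S : Finset G.edgeSet) :
    ∑ e ∈ S, faceWeight G e₀ F e =
      S.card - (F.filter (· ∈ S)).card - S.card * if e₀ ∈ F then 0 else 1 := by
  have h : ∑ e ∈ S, (if e ∈ F then (0 : ℤ) else 1) = S.card - (F.filter (· ∈ S)).card := by
    rw [Finset.sum_ite, Finset.sum_const_zero, zero_add, Finset.sum_const, nsmul_eq_mul, mul_one]
    have h1 := Finset.card_filter_add_card_filter_not (s := S) (· ∈ F)
    have h2 : F.filter (· ∈ S) = S.filter (· ∈ F) := by
      ext e
      simp [and_comm]
    rw [h2]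
    omega
  simp only [faceWeight]
  rw [Finset.sum_sub_distrib, h, Finset.sum_const, nsmul_eq_mul]

section Kirchhoff

variable {V : Type*} [Fintype V] (G : SimpleGraph V)

theorem prod_le_kirchhoff {x : G.edgeSet → ℝ} (hx : ∀ e, 0 < x e) {T : SimpleGraph V}
    (hTG : T ≤ G) (hT : T.IsTree) :
    ∏ e : G.edgeSet, (if (e : Sym2 V) ∈ T.edgeSet then 1 else x e) ≤ kirchhoff G x := by
  refine Finset.single_le_sum
    (f := fun T : SimpleGraph V =>
      ∏ e : G.edgeSet, (if (e : Sym2 V) ∈ T.edgeSet then 1 else x e))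
    (fun T _ => Finset.prod_nonneg fun e _ => ?_)
    (Finset.mem_filter.2 ⟨Finset.mem_univ T, hTG, hT⟩)
  split_ifs
  exacts [zero_le_one, (hx e).le]

theorem kirchhoff_pos (hG : G.Connected) {x : G.edgeSet → ℝ} (hx : ∀ e, 0 < x e) :
    0 < kirchhoff G x := by
  obtain ⟨T, hTG, hT⟩ := hG.exists_isTree_le
  refine lt_of_lt_of_le (Finset.prod_pos fun e _ => ?_) (prod_le_kirchhoff G hx hTG hT)
  split_ifs
  exacts [zero_lt_one, hx e]

/-- The Kirchhoff polynomial dominates every monomial whose exponent lies in its Newton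
polytope. -/
theorem prod_rpow_le_kirchhoff (hG : G.Connected) {x : G.edgeSet → ℝ} (hx : ∀ e, 0 < x e)
    {p : G.edgeSet → ℝ} (hp : ∀ F, (subLoopNumber G F : ℝ) ≤ ∑ e ∈ F, p e)
    (hp_univ : ∑ e, p e = Fintype.card G.edgeSet - Fintype.card V + 1) :
    ∏ e, x e ^ p e ≤ kirchhoff G x := by
  obtain ⟨T, hTG, hT, h⟩ := exists_isTree_sum_le G hG (fun e => Real.log (x e)) p hp hp_univ
  refine le_trans (le_of_eq_of_le ?_ (Real.exp_le_exp.2 h) |>.trans_eq ?_)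
    (prod_le_kirchhoff G hx hTG hT)
  · rw [Real.exp_sum]
    exact Finset.prod_congr rfl fun e _ => by rw [Real.rpow_def_of_pos (hx e), mul_comm]
  · rw [Real.exp_sum]
    refine Finset.prod_congr rfl fun e _ => ?_
    split_ifs
    exacts [Real.exp_zero, Real.exp_log (hx e)]

theorem continuous_kirchhoff : Continuous (kirchhoff G) := by
  unfold kirchhoff
  refine continuous_finsetSum _ fun T _ => continuous_finsetProd _ fun e _ => ?_
  split_ifs <;> fun_prop

theorem continuous_chart (e₀ : G.edgeSet) : Continuous (chart G e₀) := by
  refine continuous_pi fun e => ?_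
  unfold chart
  split_ifs <;> fun_prop

theorem chart_pos {e₀ : G.edgeSet} {u : {e : G.edgeSet // e ≠ e₀} → ℝ} (hu : ∀ e, 0 < u e)
    (e : G.edgeSet) : 0 < chart G e₀ u e := by
  unfold chart
  split_ifs
  exacts [zero_lt_one, hu _]

theorem kirchhoff_le_zpow {w : G.edgeSet → ℤ} {m : ℤ}
    (hm : ∀ T ≤ G, T.IsTree →
      ∑ e ∈ Finset.univ.filter fun e : G.edgeSet => (e : Sym2 V) ∉ T.edgeSet, w e ≤ m) (k : ℕ)
    {x : G.edgeSet → ℝ} (hx : ∀ e, 0 < x e) (hxk : ∀ e, x e ≤ 2 * 2 ^ (k * w e)) :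
    kirchhoff G x ≤
      Fintype.card (SimpleGraph V) * (2 ^ Fintype.card G.edgeSet * 2 ^ (k * m)) := by
  unfold kirchhoff
  refine (Finset.sum_le_card_nsmul _ _ (2 ^ Fintype.card G.edgeSet * 2 ^ (k * m))
    fun T hT => ?_).trans ?_
  · obtain ⟨-, hTG, hT⟩ := Finset.mem_filter.1 hT
    rw [Finset.prod_ite, Finset.prod_const_one, one_mul]
    refine (Finset.prod_le_prod (fun e _ => (hx e).le) fun e _ => hxk e).trans ?_
    rw [Finset.prod_mul_distrib, Finset.prod_const]
    refine mul_le_mul (pow_le_pow_right₀ one_le_two (Finset.card_le_univ _)) ?_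
      (Finset.prod_nonneg fun e _ => by positivity) (by positivity)
    rw [prod_two_zpow]
    exact zpow_le_zpow_right₀ one_le_two
      (mul_le_mul_of_nonneg_left (hm T hTG hT) (Int.natCast_nonneg k))
  · rw [nsmul_eq_mul]
    exact mul_le_mul_of_nonneg_right (by exact_mod_cast Finset.card_le_univ _) (by positivity)

/-- If the Kirchhoff polynomial has too low degree along some one-parameter direction in the chart
`x(e₀) = 1`, then the integral diverges. -/
theorem not_integrableOn_of_weight (hG : G.Connected) (e₀ : G.edgeSet) {w : G.edgeSet → ℤ} {m : ℤ}
    (hm : ∀ T ≤ G, T.IsTree →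
      ∑ e ∈ Finset.univ.filter fun e : G.edgeSet => (e : Sym2 V) ∉ T.edgeSet, w e ≤ m)
    (hw₀ : w e₀ = 0) {e₁ : G.edgeSet} (hw₁ : w e₁ ≠ 0) (hmw : 2 * m ≤ ∑ e, w e) :
    ¬ IntegrableOn (fun u : {e : G.edgeSet // e ≠ e₀} → ℝ =>
        (kirchhoff G (chart G e₀ u))⁻¹ ^ 2) {u | ∀ e, 0 < u e} := by
  intro hint
  let B : ℕ → Set ({e : G.edgeSet // e ≠ e₀} → ℝ) := fun k =>
    Set.pi Set.univ fun i => Set.Ioc ((2 : ℝ) ^ (k * w i)) (2 * 2 ^ (k * w i))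
  have hBpos : ∀ k, B k ⊆ {u | ∀ e, 0 < u e} := fun k u hu e =>
    lt_trans (by positivity) (hu e trivial).1
  have hBmeas : ∀ k, MeasurableSet (B k) := fun k =>
    MeasurableSet.univ_pi fun i => measurableSet_Ioc
  have he₁ : e₁ ≠ e₀ := fun h => hw₁ (h ▸ hw₀)
  have hlt : ∀ {k l : ℕ} {t : ℝ}, t ∈ Set.Ioc ((2 : ℝ) ^ (k * w e₁)) (2 * 2 ^ (k * w e₁)) →
      t ∈ Set.Ioc ((2 : ℝ) ^ (l * w e₁)) (2 * 2 ^ (l * w e₁)) →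
      (k * w e₁ : ℤ) < l * w e₁ + 1 := fun {k l t} hk hl => by
    refine (zpow_lt_zpow_iff_right₀ (one_lt_two : (1 : ℝ) < 2)).1 (hk.1.trans_le (hl.2.trans_eq ?_))
    rw [zpow_add₀ two_ne_zero, zpow_one, mul_comm]
  have hdisj : Pairwise (Function.onFun Disjoint B) := by
    intro k l hkl
    refine Set.disjoint_left.2 fun u hk hl => hkl ?_
    have h1 := hlt (hk ⟨e₁, he₁⟩ trivial) (hl ⟨e₁, he₁⟩ trivial)
    have h2 := hlt (hl ⟨e₁, he₁⟩ trivial) (hk ⟨e₁, he₁⟩ trivial)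
    exact_mod_cast mul_right_cancel₀ hw₁ (le_antisymm (Int.lt_add_one_iff.1 h1)
      (Int.lt_add_one_iff.1 h2))
  have hsum := (hasSum_integral_iUnion hBmeas hdisj
    (hint.mono_set (Set.iUnion_subset hBpos))).summable.tendsto_atTop_zero
  set C : ℝ := Fintype.card (SimpleGraph V) * 2 ^ Fintype.card G.edgeSet with hC
  have hCpos : 0 < C := by
    have : 0 < Fintype.card (SimpleGraph V) := Fintype.card_pos
    positivity
  refine (by positivity : (0 : ℝ) < C⁻¹ ^ 2).not_ge (ge_of_tendsto' hsum fun k => ?_)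
  have hvol : volume.real (B k) = 2 ^ (k * ∑ e, w e) := by
    rw [Measure.real, Real.volume_pi_Ioc_toReal fun i => by
      change (2 : ℝ) ^ (k * w i) ≤ 2 * 2 ^ (k * w i)
      linarith [show (0 : ℝ) < 2 ^ (k * w i) by positivity]]
    rw [Fintype.sum_eq_add_sum_subtype_ne w e₀, hw₀, zero_add, ← prod_two_zpow]
    exact Finset.prod_congr rfl fun i _ => by ring
  have hfin : volume (B k) ≠ ⊤ := by
    rw [Real.volume_pi_Ioc]
    exact ENNReal.prod_ne_top fun _ _ => ENNReal.ofReal_ne_top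
  have hle : ∀ u ∈ B k, (C * 2 ^ (k * m))⁻¹ ^ 2 ≤ (kirchhoff G (chart G e₀ u))⁻¹ ^ 2 := by
    intro u hu
    have hpos := chart_pos G (hBpos k hu)
    have hK := kirchhoff_le_zpow G hm k hpos fun e => by
      unfold chart
      split_ifs with h
      · rw [h, hw₀]; norm_num
      · exact (hu ⟨e, h⟩ trivial).2
    rw [← mul_assoc] at hK
    have := kirchhoff_pos G hG hpos
    gcongr
  refine le_trans ?_ (setIntegral_ge_of_const_le_real (hBmeas k) hfin hle
    (hint.mono_set (hBpos k)))
  clear_value C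
  rw [hvol, mul_inv, mul_pow, mul_assoc]
  refine le_mul_of_one_le_right (by positivity : (0 : ℝ) ≤ C⁻¹ ^ 2) ?_
  rw [← zpow_neg, ← zpow_natCast, ← zpow_mul, ← zpow_add₀ (two_ne_zero (α := ℝ))]
  refine one_le_zpow₀ one_le_two ?_
  push_cast
  nlinarith [mul_le_mul_of_nonneg_left hmw (Int.natCast_nonneg k)]

/-- A subset `F` with `|F| ≤ 2 h_F` makes the integral diverge. -/
theorem not_integrableOn_of_card_le (hG : G.Connected)
    (hlog : (Fintype.card G.edgeSet : ℤ) =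
      2 * ((Fintype.card G.edgeSet : ℤ) - Fintype.card V + 1))
    (e₀ : G.edgeSet) {F : Finset G.edgeSet} (hF : F.Nonempty) (hF' : F ≠ Finset.univ)
    (hdiv : (F.card : ℤ) ≤ 2 * subLoopNumber G F) :
    ¬ IntegrableOn (fun u : {e : G.edgeSet // e ≠ e₀} → ℝ =>
        (kirchhoff G (chart G e₀ u))⁻¹ ^ 2) {u | ∀ e, 0 < u e} := by
  have hne : ∃ e₁, faceWeight G e₀ F e₁ ≠ 0 := by
    by_cases h : e₀ ∈ F
    · obtain ⟨e, he⟩ : ∃ e, e ∉ F := by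
        by_contra! hall
        exact hF' (Finset.eq_univ_of_forall hall)
      exact ⟨e, by simp [faceWeight, h, he]⟩
    · obtain ⟨e, he⟩ := hF
      exact ⟨e, by simp [faceWeight, h, he]⟩
  obtain ⟨e₁, he₁⟩ := hne
  set h : ℤ := (Fintype.card G.edgeSet : ℤ) - Fintype.card V + 1 with hh
  refine not_integrableOn_of_weight G hG e₀ (w := faceWeight G e₀ F)
    (m := h - subLoopNumber G F - h * if e₀ ∈ F then 0 else 1) (fun T hTG hT => ?_)
    (by simp [faceWeight]) he₁ ?_
  · rw [sum_faceWeight, card_filter_notMem_of_isTree G hTG hT]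
    have := subLoopNumber_le_card_filter G hT F
    simp only [Finset.mem_filter_univ]
    linarith
  · rw [sum_faceWeight]
    simp only [Finset.mem_univ, Finset.filter_true, Finset.card_univ]
    split_ifs <;> linarith

/-- If every proper nonempty `F` satisfies `2 h_F < |F|`, then all points close to
`(1/2, …, 1/2)` on the hyperplane of degree `h` lie in the Newton polytope. -/
theorem subLoopNumber_le_sum_of_near_half (hG : G.Connected)
    (hlog : (Fintype.card G.edgeSet : ℤ) =
      2 * ((Fintype.card G.edgeSet : ℤ) - Fintype.card V + 1))
    (e₀ : G.edgeSet)
    (hfree : ∀ F : Finset G.edgeSet, F.Nonempty → F ≠ Finset.univ →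
      2 * subLoopNumber G F < (F.card : ℤ))
    {ε : ℝ} (hε : 0 ≤ ε) (hεn : 2 * (Fintype.card G.edgeSet * ε) ≤ 1) {p : G.edgeSet → ℝ}
    (hp_near : ∀ e, e ≠ e₀ → |p e - 1 / 2| ≤ ε)
    (hp_univ : ∑ e, p e = Fintype.card G.edgeSet - Fintype.card V + 1)
    (F : Finset G.edgeSet) : (subLoopNumber G F : ℝ) ≤ ∑ e ∈ F, p e := by
  have hlogR : (Fintype.card G.edgeSet : ℝ) =
      2 * ((Fintype.card G.edgeSet : ℝ) - Fintype.card V + 1) := by exact_mod_cast hlog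
  have hnear : ∀ S : Finset G.edgeSet, e₀ ∉ S →
      |∑ e ∈ S, p e - S.card * (1 / 2)| ≤ 1 / 2 := fun S hS => by
    have h1 : ∑ e ∈ S, p e - S.card * (1 / 2) = ∑ e ∈ S, (p e - 1 / 2) := by
      rw [Finset.sum_sub_distrib, Finset.sum_const, nsmul_eq_mul]
    rw [h1]
    refine (Finset.abs_sum_le_sum_abs _ _).trans ((Finset.sum_le_sum fun e he =>
      hp_near e fun h => hS (h ▸ he)).trans ?_)
    rw [Finset.sum_const, nsmul_eq_mul]
    have : (S.card : ℝ) * ε ≤ Fintype.card G.edgeSet * ε :=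
      mul_le_mul_of_nonneg_right (by exact_mod_cast Finset.card_le_univ S) hε
    linarith
  by_cases hu : F = Finset.univ
  · obtain ⟨T, hTG, hT⟩ := hG.exists_isTree_le
    have h1 := subLoopNumber_le_card_filter G hT F
    rw [hu, card_filter_notMem_of_isTree G hTG hT] at h1
    rw [hu, hp_univ]
    exact_mod_cast h1
  by_cases hne : F.Nonempty
  · have h1 : (2 * subLoopNumber G F + 1 : ℝ) ≤ F.card := by
      exact_mod_cast hfree F hne hu
    by_cases h : e₀ ∈ F
    · have h2 := abs_le.1 (hnear Fᶜ (by simpa using h))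
      have h3 := Finset.sum_add_sum_compl F p
      have h4 : (F.card : ℝ) + Fᶜ.card = Fintype.card G.edgeSet := by
        exact_mod_cast Finset.card_add_card_compl F
      linarith
    · have h2 := abs_le.1 (hnear F h)
      linarith
  · rw [Finset.not_nonempty_iff_eq_empty] at hne
    have h1 := subLoopNumber_le_of_isAcyclic G (F := ∅) (T := ⊥) bot_le
      SimpleGraph.isAcyclic_bot
    rw [hne, Finset.sum_empty]
    exact_mod_cast h1.trans (by simp)

/-- If every proper nonempty `F` satisfies `2 h_F < |F|`, then the integral converges. -/
theorem integrableOn_of_subdivergenceFree (hG : G.Connected)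
    (hlog : (Fintype.card G.edgeSet : ℤ) =
      2 * ((Fintype.card G.edgeSet : ℤ) - Fintype.card V + 1))
    (e₀ : G.edgeSet)
    (hfree : ∀ F : Finset G.edgeSet, F.Nonempty → F ≠ Finset.univ →
      2 * subLoopNumber G F < (F.card : ℤ)) :
    IntegrableOn (fun u : {e : G.edgeSet // e ≠ e₀} → ℝ =>
        (kirchhoff G (chart G e₀ u))⁻¹ ^ 2) {u | ∀ e, 0 < u e} := by
  have hcard : (0 : ℝ) < Fintype.card G.edgeSet := by exact_mod_cast Fintype.card_pos_iff.2 ⟨e₀⟩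
  set ε : ℝ := (2 * Fintype.card G.edgeSet)⁻¹ with hεdef
  have hε : 0 < ε := by positivity
  have hεn : 2 * (Fintype.card G.edgeSet * ε) ≤ 1 := by
    rw [← mul_assoc, hεdef, mul_inv_cancel₀ (by positivity)]
  set q : ℝ → ℝ := fun t => if t ≤ 1 then 1 / 2 - ε else 1 / 2 + ε with hq
  have hbound : ∀ u : {e : G.edgeSet // e ≠ e₀} → ℝ, (∀ e, 0 < u e) →
      ∏ e, u e ^ q (u e) ≤ kirchhoff G (chart G e₀ u) := fun u hu => by
    set p : G.edgeSet → ℝ := fun e => if h : e = e₀ then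
      Fintype.card G.edgeSet - Fintype.card V + 1 - ∑ i, q (u i) else q (u ⟨e, h⟩) with hp
    have hpi : ∀ i : {e : G.edgeSet // e ≠ e₀}, p i = q (u i) := fun i => by
      simp only [hp, dif_neg i.2]
    have hp_univ : ∑ e, p e = Fintype.card G.edgeSet - Fintype.card V + 1 := by
      rw [Fintype.sum_eq_add_sum_subtype_ne p e₀, Finset.sum_congr rfl fun i _ => hpi i]
      simp [hp]
    have hp_near : ∀ e, e ≠ e₀ → |p e - 1 / 2| ≤ ε := fun e he => by
      rw [hpi ⟨e, he⟩, abs_le]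
      simp only [hq]
      split_ifs <;> constructor <;> linarith
    refine le_of_eq_of_le ?_ (prod_rpow_le_kirchhoff G hG (chart_pos G hu)
      (subLoopNumber_le_sum_of_near_half G hG hlog e₀ hfree hε.le hεn hp_near hp_univ) hp_univ)
    rw [Fintype.prod_eq_mul_prod_subtype_ne _ e₀]
    have h₀ : chart G e₀ u e₀ = 1 := by simp [chart]
    rw [h₀, Real.one_rpow, one_mul]
    refine Finset.prod_congr rfl fun i _ => ?_
    rw [hpi i]
    simp [chart, i.2]
  have hset : {u : {e : G.edgeSet // e ≠ e₀} → ℝ | ∀ e, 0 < u e} =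
      Set.pi Set.univ fun _ => Set.Ioi 0 := by
    ext u
    simp
  have hmeas : MeasurableSet {u : {e : G.edgeSet // e ≠ e₀} → ℝ | ∀ e, 0 < u e} := by
    rw [hset]
    exact MeasurableSet.univ_pi fun _ => measurableSet_Ioi
  have hprod : IntegrableOn (fun u : {e : G.edgeSet // e ≠ e₀} → ℝ =>
      ∏ e, (u e ^ q (u e))⁻¹ ^ 2) {u | ∀ e, 0 < u e} := by
    have h := Integrable.fintype_prod (ι := {e : G.edgeSet // e ≠ e₀})
      (μ := fun _ => volume.restrict (Set.Ioi (0 : ℝ))) fun _ => integrableOn_min_rpow hε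
    rw [← Measure.restrict_pi_pi] at h
    rw [hset]
    exact h
  refine Integrable.mono' hprod
    (((continuous_kirchhoff G).comp (continuous_chart G e₀)).measurable.inv.pow_const
      2).aestronglyMeasurable ?_
  filter_upwards [ae_restrict_mem hmeas] with u hu
  rw [Real.norm_of_nonneg (by positivity), Finset.prod_pow, Finset.prod_inv_distrib]
  have hpos : 0 < ∏ e, u e ^ q (u e) := Finset.prod_pos fun e _ => Real.rpow_pos_of_pos (hu e) _
  have := hbound u hu
  have := kirchhoff_pos G hG (chart_pos G hu)
  gcongr

end Kirchhoff

/-- The Feynman residue of a connected graph `G` with `|E| = 2h_G` is finite if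
and only if `G` is free of divergent subgraphs, i.e. every nonempty proper edge
subset `F` satisfies `|F| > 2·h_F`. -/
theorem feynmanResidue_finite_iff_subdivergenceFree {V : Type*} [Fintype V]
    (G : SimpleGraph V) (hG : G.Connected) (hE : Nonempty G.edgeSet)
    (hlog : (Fintype.card G.edgeSet : ℤ) =
      2 * ((Fintype.card G.edgeSet : ℤ) - Fintype.card V + 1))
    (e₀ : G.edgeSet) :
    IntegrableOn (fun u : {e : G.edgeSet // e ≠ e₀} → ℝ =>
        (kirchhoff G (chart G e₀ u))⁻¹ ^ 2) {u | ∀ e, 0 < u e} ↔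
      ∀ F : Finset G.edgeSet, F.Nonempty → F ≠ Finset.univ →
        2 * subLoopNumber G F < (F.card : ℤ) := by
  refine ⟨fun hint F hF hF' => ?_, integrableOn_of_subdivergenceFree G hG hlog e₀⟩
  by_contra hdiv
  exact not_integrableOn_of_card_le G hG hlog e₀ hF hF' (not_lt.1 hdiv) hint
end

section
/- For every integer g ≥ 3, the Lebesgue integral over x : Fin g → (0, ∞) and y' : Fin (g−1) → (0, ∞) of the function (x, y') ↦ (det M_g(x, ŷ))⁻², where ŷ : Fin g → ℝ agrees with y' on the first g−1 coordinates and has last coordinate ŷ(g−1) = 1, is finite and equals binomial(2(g−1), g−1) · ζ(2g−3), where ζ(m) = ∑_{n ≥ 1} n^{−m}. This is the statement that the Feynman residue of the wheel graph with g spokes equals binomial(2(g−1), g−1) · ζ(2g−3). -/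
open MeasureTheory

/-- Cyclic successor on `Fin g`. -/
def cyc {g : ℕ} (i : Fin g) : Fin g := ⟨((i : ℕ) + 1) % g, Nat.mod_lt _ i.pos⟩

/-- The wheel Laplacian `M_g(x, y)`: the Gram matrix of the triangle cycle
basis `cᵢ = spokeᵢ − spokeᵢ₊₁ + rimᵢ` of the wheel graph with `g` spokes `x`
and `g` rim edges `y` (indices cyclic modulo `g`). -/
noncomputable def wheelLap (g : ℕ) (x y : Fin g → ℝ) :
    Matrix (Fin g) (Fin g) ℝ :=
  Matrix.of fun i j =>
    if i = j then x i + x (cyc i) + y i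
    else if j = cyc i then -x (cyc i)
    else if i = cyc j then -x (cyc j)
    else 0

/-- Extension of `y : Fin (g−1) → ℝ` to `Fin g → ℝ` with last coordinate `1`. -/
noncomputable def extendOne (g : ℕ) (y : Fin (g - 1) → ℝ) : Fin g → ℝ :=
  fun i => if h : (i : ℕ) < g - 1 then y ⟨i, h⟩ else 1


/-- The cyclic bidiagonal matrix with diagonal `d` and superdiagonal `-c`. -/
def cycBidiag {n : ℕ} (d c : Fin n → ℝ) : Matrix (Fin n) (Fin n) ℝ :=
  Matrix.of fun i j => if i = j then d i else if j = cyc i then -c i else 0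

lemma cyc_castSucc {m : ℕ} (i : Fin m) : cyc i.castSucc = i.succ := by
  ext
  have := i.isLt
  simp [cyc, Nat.mod_eq_of_lt]

lemma cyc_last (m : ℕ) : cyc (Fin.last m) = 0 := by
  ext
  simp [cyc]

lemma cyc_bijective {g : ℕ} : Function.Bijective (cyc : Fin g → Fin g) := by
  rcases g with _ | m
  · exact ⟨fun i => i.elim0, fun i => i.elim0⟩
  refine Function.Surjective.bijective_of_finite fun i => ?_
  induction i using Fin.cases with
  | zero => exact ⟨_, cyc_last m⟩
  | succ i => exact ⟨_, cyc_castSucc i⟩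

lemma cyc_ne {g : ℕ} (hg : 2 ≤ g) (i : Fin g) : cyc i ≠ i := by
  obtain ⟨m, rfl⟩ : ∃ m, g = m + 1 := ⟨g - 1, by omega⟩
  induction i using Fin.lastCases with
  | last => rw [cyc_last]; simp [Fin.ext_iff]; omega
  | cast i => rw [cyc_castSucc]; simp [Fin.ext_iff]

lemma cyc_cyc_ne {g : ℕ} (hg : 3 ≤ g) (i : Fin g) : cyc (cyc i) ≠ i := by
  obtain ⟨m, rfl⟩ : ∃ m, g = m + 1 := ⟨g - 1, by omega⟩
  intro h
  have h' := congrArg Fin.val h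
  have hi := i.isLt
  simp only [cyc] at h'
  rcases Nat.lt_or_ge (i + 1) (m + 1) with h1 | h1
  · rw [Nat.mod_eq_of_lt h1] at h'
    rcases Nat.lt_or_ge (i + 2) (m + 1) with h2 | h2
    · rw [Nat.mod_eq_of_lt h2] at h'; omega
    · have : (i : ℕ) + 1 + 1 = m + 1 := by omega
      rw [this, Nat.mod_self] at h'; omega
  · have : (i : ℕ) + 1 = m + 1 := by omega
    rw [this, Nat.mod_self, Nat.mod_eq_of_lt (by omega)] at h'
    omega

lemma det_cycBidiag {m : ℕ} (hm : 1 ≤ m) (d c : Fin (m + 1) → ℝ) :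
    (cycBidiag d c).det = ∏ i, d i - ∏ i, c i := by
  obtain ⟨k, rfl⟩ : ∃ k, m = k + 1 := ⟨m - 1, by omega⟩
  have hcol : ∀ i : Fin (k + 2), i ≠ 0 → i ≠ Fin.last (k + 1) → cycBidiag d c i 0 = 0 := by
    intro i h0 hl
    induction i using Fin.lastCases with
    | last => exact absurd rfl hl
    | cast i => simp [cycBidiag, h0, cyc_castSucc, (Fin.succ_ne_zero i).symm]
  rw [Matrix.det_succ_column_zero,
    Finset.sum_eq_add_of_mem (0 : Fin (k + 2)) (Fin.last (k + 1)) (Finset.mem_univ _)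
      (Finset.mem_univ _) (by simp [Fin.ext_iff])
      (fun i _ hi => by rw [hcol i hi.1 hi.2]; ring)]
  have h1 : ((cycBidiag d c).submatrix (Fin.succAbove 0) Fin.succ).det =
      ∏ i : Fin (k + 1), d i.succ := by
    rw [Matrix.det_of_isUpperTriangular]
    · simp [cycBidiag]
    · intro i j hij
      simp only [id] at hij
      have h2 : ¬ i = j := fun h => by simp [h] at hij
      have h3 : j.succ ≠ cyc i.succ := by
        induction i using Fin.lastCases with
        | last => rw [Fin.succ_last, cyc_last]; exact Fin.succ_ne_zero _
        | cast i =>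
          rw [Fin.succ_castSucc, cyc_castSucc]
          intro h
          have := Fin.succ_injective _ h
          subst this
          exact absurd hij (by simp [Fin.lt_def])
      simp [cycBidiag, h2, h3]
  have h2 : ((cycBidiag d c).submatrix (Fin.succAbove (Fin.last (k + 1))) Fin.succ).det =
      ∏ i : Fin (k + 1), - c i.castSucc := by
    rw [Matrix.det_of_isLowerTriangular]
    · simp [cycBidiag, cyc_castSucc, Fin.ext_iff]
    · intro i j hij
      have hij : i < j := by simpa using hij
      have h2 : i.castSucc ≠ j.succ := by
        rw [Fin.lt_def] at hij
        simp only [ne_eq, Fin.ext_iff, Fin.val_castSucc, Fin.val_succ]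
        omega
      have h3 : j ≠ i := hij.ne'
      simp [cycBidiag, h2, cyc_castSucc, h3]
  rw [h1, h2, Fin.prod_univ_succ d, Fin.prod_univ_castSucc c]
  have h3 : cycBidiag d c 0 0 = d 0 := by simp [cycBidiag]
  have h4 : cycBidiag d c (Fin.last (k + 1)) 0 = - c (Fin.last (k + 1)) := by
    simp [cycBidiag, cyc_last, Fin.ext_iff]
  rw [h3, h4, Finset.prod_neg]
  simp only [Finset.card_univ, Fintype.card_fin, Fin.val_zero, pow_zero, Fin.val_last]
  have : ((-1 : ℝ) ^ (k + 1)) * (-1) ^ (k + 1) = 1 := by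
    rw [← mul_pow]; simp
  linear_combination (-c (Fin.last (k + 1)) * ∏ i : Fin (k + 1), c i.castSucc) * this

/-- Given a solution `r` of the cyclic Riccati recursion, the wheel Laplacian factors into two
cyclic bidiagonal matrices. -/
lemma wheelLap_eq_mul {g : ℕ} (hg : 3 ≤ g) (x y r : Fin g → ℝ) (hr : ∀ i, r i ≠ 0)
    (h : ∀ i, x i + x (cyc i) + y i = x (cyc i) * r (cyc i) + x i / r i) :
    wheelLap g x y =
      (cycBidiag (fun i => x (cyc i) * r (cyc i)) (fun i => x (cyc i))).transpose *
        cycBidiag (fun _ => 1) (fun i => (r (cyc i))⁻¹) := by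
  ext i j
  obtain ⟨l, rfl⟩ := cyc_bijective.2 i
  have hinj : ∀ a b : Fin g, cyc a = cyc b ↔ a = b := fun a b => cyc_bijective.1.eq_iff
  have hsplit : ∀ k, (cycBidiag (fun i => x (cyc i) * r (cyc i)) (fun i => x (cyc i))) k (cyc l) =
      (if k = cyc l then x (cyc (cyc l)) * r (cyc (cyc l)) else 0) +
        (if k = l then - x (cyc l) else 0) := by
    intro k
    by_cases h1 : k = cyc l
    · have h2 : k ≠ l := fun h2 => cyc_ne (by omega) l (h1.symm.trans h2)
      subst h1
      simp [cycBidiag, h2]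
    · by_cases h2 : k = l
      · subst h2
        simp [cycBidiag, h1]
      · have h3 : ¬ (l = k) := fun h => h2 h.symm
        simp [cycBidiag, h1, h2, h3, hinj]
  simp only [Matrix.mul_apply, Matrix.transpose_apply, hsplit, add_mul, Finset.sum_add_distrib,
    ite_mul, zero_mul, Finset.sum_ite_eq', Finset.mem_univ, if_true]
  have e1 : cyc l ≠ l := cyc_ne (by omega) l
  have e2 : cyc (cyc l) ≠ cyc l := cyc_ne (by omega) _
  have e3 : cyc (cyc l) ≠ l := cyc_cyc_ne hg l
  by_cases h1 : j = cyc l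
  · subst h1
    have := h (cyc l)
    simp [wheelLap, cycBidiag, e1.symm, this]
    field_simp
  · by_cases h2 : j = cyc (cyc l)
    · subst h2
      have := hr (cyc (cyc l))
      simp [wheelLap, cycBidiag, e2.symm, e3.symm, e2]
      field_simp
    · by_cases h3 : j = l
      · subst h3
        simp [wheelLap, cycBidiag, e1, e3.symm]
      · have h1' : ¬ (cyc l = j) := fun h => h1 h.symm
        have h3' : ¬ (l = j) := fun h => h3 h.symm
        simp [wheelLap, cycBidiag, h1, h1', h2, h3', hinj]

lemma det_wheelLap_of_riccati {m : ℕ} (hm : 2 ≤ m) (x y r : Fin (m + 1) → ℝ) (hr : ∀ i, r i ≠ 0)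
    (h : ∀ i, x i + x (cyc i) + y i = x (cyc i) * r (cyc i) + x i / r i) :
    (wheelLap (m + 1) x y).det = (∏ i, x i) * (∏ i, r i - 1) * (1 - (∏ i, r i)⁻¹) := by
  have e : ∀ f : Fin (m + 1) → ℝ, ∏ i, f (cyc i) = ∏ i, f i := fun f =>
    cyc_bijective.prod_comp f
  rw [wheelLap_eq_mul (by omega) x y r hr h, Matrix.det_mul, Matrix.det_transpose,
    det_cycBidiag (by omega), det_cycBidiag (by omega), e fun i => x i * r i, e x,
    e fun i => (r i)⁻¹, Finset.prod_mul_distrib, Finset.prod_inv_distrib, Finset.prod_const_one]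
  ring

/-- Lebesgue measure on the positive half-line. -/
noncomputable abbrev posVol : Measure ℝ := volume.restrict (Set.Ioi 0)

lemma ae_posVol : ∀ᵐ x ∂posVol, 0 < x := ae_restrict_mem measurableSet_Ioi

lemma lintegral_posVol_of_image {s : Set ℝ} (hs : MeasurableSet s) {φ φ' : ℝ → ℝ}
    (hd : ∀ x ∈ s, HasDerivAt φ (φ' x) x) (hi : Set.InjOn φ s) (him : φ '' s = Set.Ioi 0)
    (H : ℝ → ENNReal) :
    ∫⁻ x, H x ∂posVol = ∫⁻ t in s, ENNReal.ofReal |φ' t| * H (φ t) := by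
  rw [posVol, ← him]
  exact lintegral_image_eq_lintegral_abs_deriv_mul hs (fun x hx => (hd x hx).hasDerivWithinAt) hi H

lemma lintegral_posVol_exp_sub_one {C : ℝ} (hC : 0 < C) (H : ℝ → ENNReal) :
    ∫⁻ x, H x ∂posVol =
      ∫⁻ t, ENNReal.ofReal (C * Real.exp t) * H (C * (Real.exp t - 1)) ∂posVol := by
  rw [lintegral_posVol_of_image (s := Set.Ioi 0) measurableSet_Ioi (φ := fun t => C * (Real.exp t - 1))
    (φ' := fun t => C * Real.exp t)]
  · simp_rw [abs_of_pos (mul_pos hC (Real.exp_pos _))]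
  · intro x _
    exact ((Real.hasDerivAt_exp x).sub_const 1).const_mul C
  · intro a _ b _ h
    simpa [hC.ne'] using h
  · ext x
    simp only [Set.mem_image, Set.mem_Ioi]
    constructor
    · rintro ⟨t, ht, rfl⟩
      have := Real.one_lt_exp_iff.2 ht
      exact mul_pos hC (by linarith)
    · intro hx
      refine ⟨Real.log (x / C + 1), Real.log_pos (by have := div_pos hx hC; linarith), ?_⟩
      rw [Real.exp_log (by positivity)]
      field_simp
      ring

lemma lintegral_posVol_div_exp_sub_one {C : ℝ} (hC : 0 < C) (H : ℝ → ENNReal) :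
    ∫⁻ x, H x ∂posVol = ∫⁻ t, ENNReal.ofReal (C * Real.exp t / (Real.exp t - 1) ^ 2) *
      H (C / (Real.exp t - 1)) ∂posVol := by
  have hpos : ∀ t : ℝ, 0 < t → 0 < Real.exp t - 1 := fun t ht => by
    have := Real.one_lt_exp_iff.2 ht
    linarith
  rw [lintegral_posVol_of_image (s := Set.Ioi 0) measurableSet_Ioi (φ := fun t => C / (Real.exp t - 1))
    (φ' := fun t => - (C * Real.exp t / (Real.exp t - 1) ^ 2))]
  · refine setLIntegral_congr_fun measurableSet_Ioi fun t ht => ?_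
    have h1 := hpos t ht
    simp only [abs_neg]
    rw [abs_of_pos (by positivity)]
  · intro x hx
    have h := (hasDerivAt_const x C).div ((Real.hasDerivAt_exp x).sub_const 1) (hpos x hx).ne'
    rw [show -(C * Real.exp x / (Real.exp x - 1) ^ 2) =
      (0 * (Real.exp x - 1) - C * Real.exp x) / (Real.exp x - 1) ^ 2 by ring]
    exact h
  · intro a ha b hb h
    have h1 := hpos a ha
    have h2 := hpos b hb
    simp only at h
    rw [div_eq_div_iff h1.ne' h2.ne'] at h
    have := mul_left_cancel₀ hC.ne' h
    exact Real.exp_injective (by linarith)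
  · ext x
    simp only [Set.mem_image, Set.mem_Ioi]
    constructor
    · rintro ⟨t, ht, rfl⟩
      exact div_pos hC (hpos t ht)
    · intro hx
      refine ⟨Real.log (C / x + 1), Real.log_pos (by have := div_pos hC hx; linarith), ?_⟩
      rw [Real.exp_log (by positivity), add_sub_cancel_right]
      field_simp

lemma lintegral_posVol_sub_mobius {a b c d : ℝ} (hb : 0 ≤ b) (hc : 0 < c) (hd : 1 ≤ d)
    (hdet : a * d - b * c = 1) (H : ℝ → ENNReal) :
    ∫⁻ x, H x ∂posVol = ∫⁻ w, (if (a * w + b) / (c * w + d) < w then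
      ENNReal.ofReal ((1 - ((c * w + d) ^ 2)⁻¹) * (w - (a * w + b) / (c * w + d))⁻¹ ^ 2) *
        H (w - (a * w + b) / (c * w + d))⁻¹ else 0) ∂posVol := by
  have hden : ∀ w : ℝ, 0 < w → 1 < c * w + d := fun w hw => by nlinarith [mul_pos hc hw]
  set s : Set ℝ := Set.Ioi 0 ∩ {w | (a * w + b) / (c * w + d) < w} with hs_def
  have hm : MeasurableSet {w : ℝ | (a * w + b) / (c * w + d) < w} :=
    measurableSet_lt (by fun_prop) measurable_id
  have hs : MeasurableSet s := measurableSet_Ioi.inter hm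
  rw [lintegral_posVol_of_image hs (φ := fun w => (w - (a * w + b) / (c * w + d))⁻¹)
    (φ' := fun w => - ((1 - ((c * w + d) ^ 2)⁻¹) * (w - (a * w + b) / (c * w + d))⁻¹ ^ 2))]
  · rw [hs_def, Set.inter_comm, ← Measure.restrict_restrict hm, ← lintegral_indicator hm]
    refine lintegral_congr_ae ?_
    filter_upwards [ae_posVol] with w hw
    rw [Set.indicator_apply]
    refine if_congr Iff.rfl ?_ rfl
    have h1 := hden w hw
    have : (0 : ℝ) ≤ 1 - ((c * w + d) ^ 2)⁻¹ := by
      have : ((c * w + d) ^ 2)⁻¹ ≤ 1 := inv_le_one_of_one_le₀ (by nlinarith)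
      linarith
    rw [abs_neg, abs_of_nonneg (by positivity)]
  · rintro w ⟨hw, hw2⟩
    have h1 := hden w hw
    have h2 : w - (a * w + b) / (c * w + d) ≠ 0 := (sub_pos.2 hw2).ne'
    have hn : HasDerivAt (fun w : ℝ => a * w + b) (a * 1) w :=
      ((hasDerivAt_id w).const_mul a).add_const b
    have hdn : HasDerivAt (fun w : ℝ => c * w + d) (c * 1) w :=
      ((hasDerivAt_id w).const_mul c).add_const d
    have h3 : c * w + d ≠ 0 := by positivity
    have h := ((hasDerivAt_id w).sub (hn.div hdn h3)).inv h2
    refine h.congr_deriv ?_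
    have h4 : (a * 1 * (c * w + d) - (a * w + b) * (c * 1)) = 1 := by linear_combination hdet
    rw [h4, one_div, inv_pow, neg_div, div_eq_mul_inv]
    rfl
  · rintro w ⟨hw, hw2⟩ v ⟨hv, hv2⟩ h
    have h1 := hden w hw
    have h2 := hden v hv
    have h := inv_injective h
    have h3 : c * w + d ≠ 0 := by positivity
    have h4 : c * v + d ≠ 0 := by positivity
    rw [sub_eq_sub_iff_sub_eq_sub, div_sub_div _ _ h3 h4, eq_div_iff (by positivity)] at h
    have h5 : (w - v) * ((c * w + d) * (c * v + d) - 1) = 0 := by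
      linear_combination h + (w - v) * hdet
    rcases mul_eq_zero.1 h5 with h6 | h6
    · linarith
    · nlinarith
  · ext x
    simp only [Set.mem_image, Set.mem_Ioi]
    constructor
    · rintro ⟨w, ⟨hw, hw2⟩, rfl⟩
      exact inv_pos.2 (sub_pos.2 hw2)
    · intro hx
      set z := x⁻¹ with hz
      have hzpos : 0 < z := inv_pos.2 hx
      set B := d - a - z * c with hB
      set E := b + z * d with hE
      have hEpos : 0 < E := by positivity
      have hdisc : 0 < B ^ 2 + 4 * c * E := by positivity
      have hlt : |B| < Real.sqrt (B ^ 2 + 4 * c * E) := by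
        rw [← Real.sqrt_sq_eq_abs]
        exact Real.sqrt_lt_sqrt (sq_nonneg _) (by have := mul_pos hc hEpos; linarith)
      have hwpos : 0 < (-B + Real.sqrt (B ^ 2 + 4 * c * E)) / (2 * c) := by
        have := le_abs_self B
        apply div_pos <;> linarith
      have hroot : ∀ w, w = (-B + Real.sqrt (B ^ 2 + 4 * c * E)) / (2 * c) →
          c * w ^ 2 + B * w - E = 0 := by
        intro w hw
        have h1 : 2 * c * w + B = Real.sqrt (B ^ 2 + 4 * c * E) := by
          rw [hw]; field_simp; ring
        have h2 := Real.sq_sqrt hdisc.le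
        rw [← h1] at h2
        have : 4 * c * (c * w ^ 2 + B * w - E) = 0 := by linear_combination h2
        simpa [hc.ne'] using this
      generalize hw : (-B + Real.sqrt (B ^ 2 + 4 * c * E)) / (2 * c) = w at hwpos hroot
      have hr := hroot w rfl
      have h1 := hden w hwpos
      have h3 : c * w + d ≠ 0 := by positivity
      have key : w - (a * w + b) / (c * w + d) = z := by
        field_simp
        rw [hB, hE] at hr
        linear_combination hr
      refine ⟨w, ⟨hwpos, ?_⟩, ?_⟩
      · simp only [Set.mem_ofPred_eq]
        linarith
      · simp only [key, hz, inv_inv]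

lemma lintegral_pi_succ {α : Type} [MeasurableSpace α] (μ : Measure α) [SigmaFinite μ] (n : ℕ)
    {F : (Fin (n + 1) → α) → ENNReal} (hF : Measurable F) :
    ∫⁻ v, F v ∂(Measure.pi fun _ => μ) =
      ∫⁻ a, ∫⁻ v, F (Fin.cons a v) ∂(Measure.pi fun _ => μ) ∂μ := by
  have h := (measurePreserving_piFinSuccAbove (fun _ : Fin (n + 1) => μ) 0).symm
  rw [← h.lintegral_comp hF,
    lintegral_prod (fun z => F ((MeasurableEquiv.piFinSuccAbove (fun _ => α) 0).symm z))
      (hF.comp h.measurable).aemeasurable]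
  simp [MeasurableEquiv.piFinSuccAbove_symm_apply, Fin.insertNthEquiv]

lemma lintegral_pi_zero {α : Type} [MeasurableSpace α] (μ : Measure α) [SigmaFinite μ]
    (F : (Fin 0 → α) → ENNReal) :
    ∫⁻ v, F v ∂(Measure.pi fun _ => μ) = F Fin.elim0 := by
  rw [Measure.pi_of_empty (fun _ => μ) Fin.elim0, lintegral_dirac]

lemma lintegral_pow_lt (k : ℕ) {r : ℝ} (hr : 0 < r) :
    ∫⁻ x, (if x < r then ENNReal.ofReal (x ^ k / k.factorial) else 0) ∂posVol =
      ENNReal.ofReal (r ^ (k + 1) / (k + 1).factorial) := by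
  have h1 : ∫⁻ x, (if x < r then ENNReal.ofReal (x ^ k / k.factorial) else 0) ∂posVol =
      ∫⁻ x in Set.Ioo 0 r, ENNReal.ofReal (x ^ k / k.factorial) := by
    rw [← Set.Iio_inter_Ioi, ← Measure.restrict_restrict measurableSet_Iio,
      ← lintegral_indicator measurableSet_Iio]
    rfl
  rw [h1, restrict_Ioo_eq_restrict_Ioc, ← ofReal_integral_eq_lintegral_ofReal]
  · rw [← intervalIntegral.integral_of_le hr.le, intervalIntegral.integral_div, integral_pow,
      Nat.factorial_succ]
    congr 1
    push_cast
    have : (k.factorial : ℝ) ≠ 0 := by positivity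
    field_simp
    simp
  · exact (Continuous.integrableOn_Icc (by fun_prop)).mono_set Set.Ioc_subset_Icc_self
  · filter_upwards [ae_restrict_mem measurableSet_Ioc] with x hx
    have := hx.1
    simp only [Pi.zero_apply]
    positivity

lemma lintegral_posVol_add (a : ℝ) (ha : 0 < a) (h : ℝ → ENNReal) :
    ∫⁻ x, h (a + x) ∂posVol = ∫⁻ x, (if a < x then h x else 0) ∂posVol := by
  have h1 : ∫⁻ x, (if a < x then h x else 0) ∂posVol = ∫⁻ x, (if a < x then h x else 0) := by
    rw [posVol, ← lintegral_indicator measurableSet_Ioi]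
    congr 1
    ext x
    by_cases hx : a < x
    · simp [Set.indicator, hx, ha.trans hx]
    · simp [hx]
  rw [h1, ← lintegral_add_left_eq_self (μ := volume) _ a, posVol, ← lintegral_indicator measurableSet_Ioi]
  congr 1
  ext x
  simp [Set.indicator]

/-- Integrating a function of the sum of the coordinates over the positive orthant. -/
lemma lintegral_pi_sum (k : ℕ) {h : ℝ → ENNReal} (hh : Measurable h) :
    ∫⁻ v : Fin (k + 1) → ℝ, h (∑ i, v i) ∂(Measure.pi fun _ => posVol) =
      ∫⁻ σ, ENNReal.ofReal (σ ^ k / k.factorial) * h σ ∂posVol := by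
  induction k generalizing h with
  | zero =>
    rw [lintegral_pi_succ _ _ (by fun_prop)]
    simp
  | succ k ih =>
    rw [lintegral_pi_succ _ _ (by fun_prop)]
    simp only [Fin.sum_univ_succ (n := k + 1), Fin.cons_zero, Fin.cons_succ]
    have e1 : ∀ a : ℝ, ∫⁻ v : Fin (k + 1) → ℝ, h (a + ∑ i, v i) ∂(Measure.pi fun _ => posVol) =
        ∫⁻ σ, ENNReal.ofReal (σ ^ k / k.factorial) * h (a + σ) ∂posVol := fun a =>
      ih (h := fun σ => h (a + σ)) (by fun_prop)
    simp_rw [e1]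
    have m1 : Measurable fun p : ℝ × ℝ => ENNReal.ofReal (p.2 ^ k / k.factorial) * h (p.1 + p.2) :=
      by fun_prop
    have m2 : Measurable fun p : ℝ × ℝ => if p.1 < p.2 then
        ENNReal.ofReal (p.1 ^ k / k.factorial) * h p.2 else 0 :=
      Measurable.ite (measurableSet_lt measurable_fst measurable_snd) (by fun_prop)
        measurable_const
    rw [lintegral_lintegral_swap m1.aemeasurable]
    have e2 : ∀ᵐ σ ∂posVol, ∫⁻ a, ENNReal.ofReal (σ ^ k / k.factorial) * h (a + σ) ∂posVol =
        ∫⁻ ρ, (if σ < ρ then ENNReal.ofReal (σ ^ k / k.factorial) * h ρ else 0) ∂posVol := by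
      filter_upwards [ae_posVol] with σ hσ
      rw [← lintegral_posVol_add σ hσ (fun ρ => ENNReal.ofReal (σ ^ k / k.factorial) * h ρ)]
      simp_rw [add_comm σ]
    rw [lintegral_congr_ae e2, lintegral_lintegral_swap m2.aemeasurable]
    refine lintegral_congr_ae ?_
    filter_upwards [ae_posVol] with ρ hρ
    rw [← lintegral_pow_lt k hρ, ← lintegral_mul_const _ (Measurable.ite measurableSet_Iio
      (by fun_prop) measurable_const)]
    simp only [ite_mul, zero_mul]

/-- The `w`-points of the orbit of `w` under the steps with logarithmic increments `p`. -/
noncomputable def orbit {m : ℕ} (w : ℝ) (p : Fin m → ℝ × ℝ) (i : Fin (m + 1)) : ℝ :=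
  w * Real.exp (Fin.partialSum (fun j => (p j).2 - (p j).1) i)

/-- The rim and spoke weights whose orbit from `w` has logarithmic increments `p`. -/
noncomputable def orbitWeights {m : ℕ} (w : ℝ) (p : Fin m → ℝ × ℝ) (i : Fin m) : ℝ × ℝ :=
  ((Real.exp (p i).1 - 1) / orbit w p i.castSucc,
    Real.exp (p i).1 / (orbit w p i.castSucc * (Real.exp (p i).2 - 1)))

/-- The product of the elementary Möbius transformations attached to a list of weights. -/
noncomputable def transfer : (m : ℕ) → (Fin m → ℝ × ℝ) → Matrix (Fin 2) (Fin 2) ℝ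
  | 0, _ => 1
  | m + 1, q => transfer m (Fin.tail q) *
      !![1 + (q 0).2⁻¹ * (q 0).1, (q 0).2⁻¹; (q 0).1, 1]

lemma orbit_zero {m : ℕ} (w : ℝ) (p : Fin m → ℝ × ℝ) : orbit w p 0 = w := by
  simp [orbit]

lemma orbit_succ {m : ℕ} (w : ℝ) (p : Fin m → ℝ × ℝ) (i : Fin m) :
    orbit w p i.succ = orbit w p i.castSucc * Real.exp (p i).2 / Real.exp (p i).1 := by
  rw [orbit, orbit, Fin.partialSum_succ, Real.exp_add, Real.exp_sub]
  ring

lemma orbit_pos {m : ℕ} {w : ℝ} (hw : 0 < w) (p : Fin m → ℝ × ℝ) (i : Fin (m + 1)) :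
    0 < orbit w p i := mul_pos hw (Real.exp_pos _)

lemma orbit_last {m : ℕ} (w : ℝ) (p : Fin m → ℝ × ℝ) :
    orbit w p (Fin.last m) = w * Real.exp (∑ i, (p i).2 - ∑ i, (p i).1) := by
  rw [orbit, ← Finset.sum_sub_distrib, Fin.partialSum, Fin.val_last,
    List.take_of_length_le (by simp), List.sum_ofFn]

lemma orbit_cons_succ {m : ℕ} (w : ℝ) (a : ℝ × ℝ) (p : Fin m → ℝ × ℝ) (i : Fin (m + 1)) :
    orbit w (Fin.cons a p : Fin (m + 1) → ℝ × ℝ) i.succ =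
      orbit (w * Real.exp a.2 / Real.exp a.1) p i := by
  simp only [orbit]
  rw [Fin.partialSum_succ', Real.exp_add, Fin.cons_zero, Real.exp_sub]
  have : Fin.tail (fun j => ((Fin.cons a p : Fin (m + 1) → ℝ × ℝ) j).2 -
      ((Fin.cons a p : Fin (m + 1) → ℝ × ℝ) j).1) = fun j => (p j).2 - (p j).1 := by
    ext j
    simp [Fin.tail]
  rw [this]
  ring

lemma orbitWeights_cons {m : ℕ} (w : ℝ) (a : ℝ × ℝ) (p : Fin m → ℝ × ℝ) :
    orbitWeights w (Fin.cons a p : Fin (m + 1) → ℝ × ℝ) =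
      Fin.cons ((Real.exp a.1 - 1) / w, Real.exp a.1 / (w * (Real.exp a.2 - 1)))
        (orbitWeights (w * Real.exp a.2 / Real.exp a.1) p) := by
  ext1 i
  induction i using Fin.cases with
  | zero => simp [orbitWeights, orbit_zero]
  | succ i => simp [orbitWeights, ← Fin.succ_castSucc, orbit_cons_succ, -Fin.castSucc_succ]

lemma measurable_orbit {m : ℕ} (i : Fin (m + 1)) :
    Measurable fun z : ℝ × (Fin m → ℝ × ℝ) => orbit z.1 z.2 i := by
  simp only [orbit]
  refine measurable_fst.mul (Real.measurable_exp.comp ?_)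
  induction i using Fin.induction with
  | zero => simp
  | succ i ih =>
    simp only [Fin.partialSum_succ]
    exact ih.add (by fun_prop)

lemma measurable_orbitWeights {m : ℕ} :
    Measurable fun z : ℝ × (Fin m → ℝ × ℝ) => orbitWeights z.1 z.2 := by
  refine measurable_pi_lambda _ fun i => ?_
  have := measurable_orbit i.castSucc
  simp only [orbitWeights]
  fun_prop

lemma measurable_orbitWeights_right {m : ℕ} (w : ℝ) :
    Measurable fun p : Fin m → ℝ × ℝ => orbitWeights w p :=
  measurable_orbitWeights.comp measurable_prodMk_left

lemma measurable_transfer (m : ℕ) (i j : Fin 2) :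
    Measurable fun q : Fin m → ℝ × ℝ => transfer m q i j := by
  induction m generalizing i j with
  | zero => simp [transfer]
  | succ m ih =>
    have h : ∀ i j, Measurable fun q : Fin (m + 1) → ℝ × ℝ => transfer m (Fin.tail q) i j :=
      fun i j => (ih i j).comp (measurable_pi_lambda _ fun k => measurable_pi_apply k.succ)
    simp only [transfer, Matrix.mul_apply, Fin.sum_univ_two]
    have h0 := h i 0
    have h1 := h i 1
    fin_cases j <;> simp <;> fun_prop

lemma det_transfer (m : ℕ) (q : Fin m → ℝ × ℝ) : (transfer m q).det = 1 := by
  induction m with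
  | zero => simp [transfer]
  | succ m ih =>
    rw [transfer, Matrix.det_mul, ih, Matrix.det_fin_two_of]
    ring

lemma transfer_bounds (m : ℕ) (q : Fin m → ℝ × ℝ) (hq : ∀ i, 0 < (q i).1 ∧ 0 < (q i).2) :
    1 ≤ transfer m q 0 0 ∧ 0 ≤ transfer m q 0 1 ∧ 0 ≤ transfer m q 1 0 ∧
      1 ≤ transfer m q 1 1 := by
  induction m with
  | zero => simp [transfer]
  | succ m ih =>
    obtain ⟨ha, hb, hc, hd⟩ := ih (Fin.tail q) fun i => hq i.succ
    obtain ⟨h1, h2⟩ := hq 0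
    have h3 := inv_pos.2 h2
    simp only [transfer, Matrix.mul_apply, Fin.sum_univ_two, Matrix.of_apply, Matrix.cons_val_zero,
      Matrix.cons_val_one, Matrix.cons_val', Matrix.cons_val_fin_one, mul_one]
    have h4 := mul_pos h3 h1
    refine ⟨?_, ?_, ?_, ?_⟩
    · nlinarith [mul_nonneg hb h1.le, mul_nonneg (zero_le_one.trans ha) h4.le]
    · nlinarith [mul_nonneg (zero_le_one.trans ha) h3.le]
    · nlinarith [mul_nonneg hc h4.le, mul_nonneg (zero_le_one.trans hd) h1.le]
    · nlinarith [mul_nonneg hc h3.le]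

lemma transfer_orbitWeights {m : ℕ} {w : ℝ} (hw : 0 < w) (p : Fin m → ℝ × ℝ)
    (hp : ∀ i, 0 < (p i).2) :
    transfer m (orbitWeights w p) 0 0 * w + transfer m (orbitWeights w p) 0 1 =
        w * Real.exp (∑ i, (p i).2) ∧
      transfer m (orbitWeights w p) 1 0 * w + transfer m (orbitWeights w p) 1 1 =
        Real.exp (∑ i, (p i).1) := by
  induction m generalizing w with
  | zero => simp [transfer]
  | succ m ih =>
    rw [← Fin.cons_self_tail p, orbitWeights_cons]
    set a := p 0 with ha
    have hs : 0 < Real.exp a.2 - 1 := by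
      have := Real.one_lt_exp_iff.2 (hp 0)
      linarith
    obtain ⟨h1, h2⟩ := ih (w := w * Real.exp a.2 / Real.exp a.1) (by positivity) (Fin.tail p)
      fun i => hp i.succ
    simp only [transfer, Fin.tail_cons, Fin.cons_zero, Matrix.mul_apply, Fin.sum_univ_two,
      Matrix.of_apply, Matrix.cons_val_zero, Matrix.cons_val_one, Matrix.cons_val',
      Matrix.cons_val_fin_one]
    simp only [Fin.sum_univ_succ (n := m), Fin.cons_zero, Fin.cons_succ, Real.exp_add]
    generalize transfer m (orbitWeights (w * Real.exp a.2 / Real.exp a.1) (Fin.tail p)) = N at *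
    have ht := Real.exp_pos a.1
    generalize Real.exp a.1 = t at *
    generalize Real.exp a.2 = s at *
    constructor
    · calc _ = t * (N 0 0 * (w * s / t) + N 0 1) := by field_simp; ring
        _ = _ := by rw [h1]; field_simp
    · calc _ = t * (N 1 0 * (w * s / t) + N 1 1) := by field_simp; ring
        _ = _ := by rw [h2]

lemma lintegral_pair_subst {w : ℝ} (hw : 0 < w) {H : ℝ × ℝ → ENNReal} (hH : Measurable H) :
    ∫⁻ q, H q ∂(posVol.prod posVol) = ∫⁻ a : ℝ × ℝ,
      ENNReal.ofReal (Real.exp a.2 * (Real.exp a.1 / (w * (Real.exp a.2 - 1))) ^ 2) *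
        H ((Real.exp a.1 - 1) / w, Real.exp a.1 / (w * (Real.exp a.2 - 1)))
          ∂(posVol.prod posVol) := by
  rw [lintegral_prod _ hH.aemeasurable, lintegral_prod _ (by fun_prop),
    lintegral_posVol_exp_sub_one (inv_pos.2 hw)]
  refine lintegral_congr fun t => ?_
  rw [lintegral_posVol_div_exp_sub_one (C := Real.exp t / w) (by positivity),
    ← lintegral_const_mul _ (by fun_prop)]
  refine lintegral_congr fun s => ?_
  simp only
  rw [← mul_assoc, ← ENNReal.ofReal_mul (by positivity)]
  have e1 : w⁻¹ * Real.exp t * (Real.exp t / w * Real.exp s / (Real.exp s - 1) ^ 2) =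
      Real.exp s * (Real.exp t / (w * (Real.exp s - 1))) ^ 2 := by
    rw [div_pow, mul_pow]
    field_simp
  have e2 : w⁻¹ * (Real.exp t - 1) = (Real.exp t - 1) / w := by ring
  rw [e1, e2, div_div]

lemma measurable_fin_cons {α : Type} [MeasurableSpace α] {m : ℕ} :
    Measurable fun z : α × (Fin m → α) => (Fin.cons z.1 z.2 : Fin (m + 1) → α) :=
  measurable_pi_lambda _ fun i => by
    induction i using Fin.cases with
    | zero => simpa using measurable_fst
    | succ i => simpa using measurable_pi_iff.1 measurable_snd i

lemma lintegral_orbitWeights {m : ℕ} {w : ℝ} (hw : 0 < w) {H : (Fin m → ℝ × ℝ) → ENNReal}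
    (hH : Measurable H) :
    ∫⁻ q, H q ∂(Measure.pi fun _ => posVol.prod posVol) = ∫⁻ p : Fin m → ℝ × ℝ,
      ENNReal.ofReal (Real.exp (∑ i, (p i).2) * ∏ i, (orbitWeights w p i).2 ^ 2) *
        H (orbitWeights w p) ∂(Measure.pi fun _ => posVol.prod posVol) := by
  have hmeas : ∀ (m : ℕ) (w : ℝ), Measurable fun p : Fin m → ℝ × ℝ =>
      ENNReal.ofReal (Real.exp (∑ i, (p i).2) * ∏ i, (orbitWeights w p i).2 ^ 2) := by
    intro m w
    have h2 : ∀ i, Measurable fun p : Fin m → ℝ × ℝ => (orbitWeights w p i).2 := fun i =>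
      (measurable_pi_iff.1 (measurable_orbitWeights_right w) i).snd
    fun_prop
  induction m generalizing w with
  | zero =>
    rw [lintegral_pi_zero, lintegral_pi_zero]
    simp [Subsingleton.elim _ (Fin.elim0 : Fin 0 → ℝ × ℝ)]
  | succ m ih =>
    have hrhs : Measurable fun p : Fin (m + 1) → ℝ × ℝ =>
        ENNReal.ofReal (Real.exp (∑ i, (p i).2) * ∏ i, (orbitWeights w p i).2 ^ 2) *
          H (orbitWeights w p) := (hmeas (m + 1) w).mul (hH.comp (measurable_orbitWeights_right w))
    have hlhs : Measurable fun a : ℝ × ℝ =>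
        ∫⁻ v : Fin m → ℝ × ℝ, H (Fin.cons a v) ∂(Measure.pi fun _ => posVol.prod posVol) :=
      (hH.comp measurable_fin_cons).lintegral_prod_right'
    rw [lintegral_pi_succ _ _ hH, lintegral_pi_succ _ _ hrhs, lintegral_pair_subst hw hlhs]
    refine lintegral_congr fun a => ?_
    set w' := w * Real.exp a.2 / Real.exp a.1
    have hw' : 0 < w' := by positivity
    have htail : Measurable fun v : Fin m → ℝ × ℝ => H (Fin.cons ((Real.exp a.1 - 1) / w,
        Real.exp a.1 / (w * (Real.exp a.2 - 1))) v) :=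
      hH.comp (measurable_fin_cons.comp measurable_prodMk_left)
    have hmul : Measurable fun p : Fin m → ℝ × ℝ =>
        ENNReal.ofReal (Real.exp (∑ i, (p i).2) * ∏ i, (orbitWeights w' p i).2 ^ 2) *
          H (Fin.cons ((Real.exp a.1 - 1) / w, Real.exp a.1 / (w * (Real.exp a.2 - 1)))
            (orbitWeights w' p)) :=
      (hmeas m w').mul (htail.comp (measurable_orbitWeights_right w'))
    rw [ih hw' htail, ← lintegral_const_mul _ hmul]
    refine lintegral_congr fun v => ?_
    rw [orbitWeights_cons, ← mul_assoc, ← ENNReal.ofReal_mul (by positivity)]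
    congr 2
    rw [Fin.sum_univ_succ, Fin.prod_univ_succ]
    simp only [Fin.cons_zero, Fin.cons_succ, Real.exp_add]
    ring

lemma measurable_det_wheelLap (g : ℕ) : Measurable fun z : (Fin g → ℝ) × (Fin (g - 1) → ℝ) =>
    (wheelLap g z.1 (extendOne g z.2)).det := by
  have hext : ∀ i, Measurable fun z : (Fin g → ℝ) × (Fin (g - 1) → ℝ) => extendOne g z.2 i := by
    intro i
    simp only [extendOne]
    split_ifs <;> fun_prop
  have hent : ∀ i j, Measurable fun z : (Fin g → ℝ) × (Fin (g - 1) → ℝ) =>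
      wheelLap g z.1 (extendOne g z.2) i j := by
    intro i j
    have := hext i
    simp only [wheelLap, Matrix.of_apply]
    split_ifs <;> fun_prop
  simp only [Matrix.det_apply]
  fun_prop

/-- The determinant of the wheel Laplacian in orbit coordinates. -/
lemma det_wheelLap_orbitWeights {m : ℕ} (hm : 2 ≤ m) (p : Fin m → ℝ × ℝ)
    (hp : ∀ i, 0 < (p i).2) {τ w u : ℝ} (hτ : 0 < τ)
    (hw : w = Real.exp (∑ i, (p i).1 - ∑ i, (p i).2) * (Real.exp τ - 1))
    (hu : u = 1 - (Real.exp τ)⁻¹) (huw : u < w) :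
    (wheelLap (m + 1) (Fin.cons (w - u)⁻¹ fun i => (orbitWeights w p i).2)
      (extendOne (m + 1) fun i => (orbitWeights w p i).1)).det =
      ((w - u)⁻¹ * ∏ i, (orbitWeights w p i).2) * (Real.exp (τ + ∑ i, (p i).1) - 1) *
        (1 - (Real.exp (τ + ∑ i, (p i).1))⁻¹) := by
  have hτ1 : 1 < Real.exp τ := Real.one_lt_exp_iff.2 hτ
  have hu0 : 0 < u := by
    rw [hu]
    have := inv_lt_one_of_one_lt₀ hτ1
    linarith
  have hw0 : 0 < w := hu0.trans huw
  have hwu : w - u ≠ 0 := (sub_pos.2 huw).ne'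
  set r : Fin (m + 1) → ℝ := Fin.cons (w / u) fun i => Real.exp (p i).2 with hr_def
  set x : Fin (m + 1) → ℝ := Fin.cons (w - u)⁻¹ fun i => (orbitWeights w p i).2 with hx_def
  have hr : ∀ i, 0 < r i := by
    intro i
    induction i using Fin.cases with
    | zero => simpa [hr_def] using div_pos hw0 hu0
    | succ i => simpa [hr_def] using Real.exp_pos _
  have hxr : ∀ i, x i * (r i - 1) = r i / orbit w p i := by
    intro i
    induction i using Fin.cases with
    | zero =>
      simp only [hx_def, hr_def, Fin.cons_zero, orbit_zero]
      field_simp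
    | succ i =>
      have h1 := Real.one_lt_exp_iff.2 (hp i)
      have h2 : Real.exp (p i).2 - 1 ≠ 0 := by linarith
      have h3 := (orbit_pos hw0 p i.castSucc).ne'
      simp only [hx_def, hr_def, Fin.cons_succ, orbit_succ, orbitWeights]
      field_simp
  have hxr' : ∀ i, x i - x i / r i = 1 / orbit w p i := by
    intro i
    have h1 := (hr i).ne'
    have h2 := (orbit_pos hw0 p i).ne'
    have h3 := hxr i
    field_simp at h3 ⊢
    linear_combination h3
  have hlast : orbit w p (Fin.last m) = Real.exp τ - 1 := by
    rw [orbit_last, hw, mul_right_comm, ← Real.exp_add, sub_add_sub_cancel, sub_self, Real.exp_zero,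
      one_mul]
  have hprod : ∏ i, r i = Real.exp (τ + ∑ i, (p i).1) := by
    rw [Fin.prod_univ_succ]
    simp only [hr_def, Fin.cons_zero, Fin.cons_succ]
    rw [← Real.exp_sum, Real.exp_add, hw, hu, Real.exp_sub]
    have : Real.exp τ - 1 ≠ 0 := by linarith
    field_simp
  rw [det_wheelLap_of_riccati hm x _ r (fun i => (hr i).ne'), hprod, Fin.prod_univ_succ]
  · simp [hx_def]
  · intro i
    have h1 := hxr (cyc i)
    have h2 := hxr' i
    have key : extendOne (m + 1) (fun i => (orbitWeights w p i).1) i =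
        r (cyc i) / orbit w p (cyc i) - 1 / orbit w p i := by
      induction i using Fin.lastCases with
      | last =>
        rw [cyc_last, hlast, orbit_zero]
        simp only [extendOne, hr_def, Fin.cons_zero, hu]
        rw [dif_neg (by simp)]
        have : Real.exp τ - 1 ≠ 0 := by linarith
        field_simp
      | cast i =>
        rw [cyc_castSucc, orbit_succ]
        simp only [extendOne, hr_def, Fin.cons_succ]
        rw [dif_pos (by simp)]
        have h3 := (orbit_pos hw0 p i.castSucc).ne'
        have h4 : (⟨(i.castSucc : ℕ), by simp⟩ : Fin (m + 1 - 1)) = i := rfl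
        rw [h4, orbitWeights]
        field_simp
    rw [key]
    linear_combination h2 - h1

lemma ae_pi_posVol_pair (m : ℕ) :
    ∀ᵐ q : Fin m → ℝ × ℝ ∂(Measure.pi fun _ => posVol.prod posVol),
      ∀ i, 0 < (q i).1 ∧ 0 < (q i).2 := by
  have h : ∀ᵐ a : ℝ × ℝ ∂(posVol.prod posVol), 0 < a.1 ∧ 0 < a.2 :=
    (Measure.quasiMeasurePreserving_fst.ae ae_posVol).and
      (Measure.quasiMeasurePreserving_snd.ae ae_posVol)
  exact Filter.eventually_all.2 fun i =>
    (Measure.tendsto_eval_ae_ae (μ := fun _ : Fin m => posVol.prod posVol) (i := i)).eventually h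

lemma lintegral_pi_pair {m : ℕ} {F : (Fin m → ℝ) × (Fin m → ℝ) → ENNReal} (hF : Measurable F) :
    ∫⁻ q : Fin m → ℝ × ℝ, F (fun i => (q i).1, fun i => (q i).2)
        ∂(Measure.pi fun _ => posVol.prod posVol) =
      ∫⁻ z, F z ∂((Measure.pi fun _ => posVol).prod (Measure.pi fun _ => posVol)) :=
  (measurePreserving_arrowProdEquivProdArrow ℝ ℝ (Fin m) (fun _ => posVol)
    (fun _ => posVol)).lintegral_comp hF

lemma lintegral_wheel {m : ℕ} (hm : 2 ≤ m) :
    ∫⁻ z : (Fin (m + 1) → ℝ) × (Fin m → ℝ),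
        ENNReal.ofReal ((wheelLap (m + 1) z.1 (extendOne (m + 1) z.2)).det⁻¹ ^ 2)
        ∂((Measure.pi fun _ => posVol).prod (Measure.pi fun _ => posVol)) =
      ∫⁻ p : Fin m → ℝ × ℝ, ∫⁻ τ, (if ∑ i, (p i).2 < τ + ∑ i, (p i).1 then
        ENNReal.ofReal (Real.exp (-(τ + ∑ i, (p i).1)) * (1 + Real.exp (-(τ + ∑ i, (p i).1))) /
          (1 - Real.exp (-(τ + ∑ i, (p i).1))) ^ 3) else 0) ∂posVol
        ∂(Measure.pi fun _ => posVol.prod posVol) := by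
  set f : (Fin (m + 1) → ℝ) × (Fin m → ℝ) → ENNReal := fun z =>
    ENNReal.ofReal ((wheelLap (m + 1) z.1 (extendOne (m + 1) z.2)).det⁻¹ ^ 2) with hf_def
  have hf : Measurable f :=
    ENNReal.measurable_ofReal.comp ((measurable_det_wheelLap (m + 1)).inv.pow_const 2)
  have hJ0 : Measurable fun z : ((Fin m → ℝ) × (Fin m → ℝ)) × ℝ =>
      f (Fin.cons z.2 z.1.2, z.1.1) :=
    hf.comp ((measurable_fin_cons.comp (measurable_snd.prodMk measurable_fst.snd)).prodMk
      measurable_fst.fst)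
  have hJ : Measurable fun z : (Fin m → ℝ) × (Fin m → ℝ) =>
      ∫⁻ x₀, f (Fin.cons x₀ z.2, z.1) ∂posVol := hJ0.lintegral_prod_right'
  have e1 : ∫⁻ z, f z ∂((Measure.pi fun _ => posVol).prod (Measure.pi fun _ => posVol)) =
      ∫⁻ q : Fin m → ℝ × ℝ, ∫⁻ x₀, f (Fin.cons x₀ fun i => (q i).2, fun i => (q i).1) ∂posVol
        ∂(Measure.pi fun _ => posVol.prod posVol) := by
    rw [lintegral_prod_symm' _ hf, lintegral_pi_pair hJ, lintegral_prod _ hJ.aemeasurable]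
    refine lintegral_congr fun y => ?_
    have hfy : Measurable fun x => f (x, y) := hf.comp measurable_prodMk_right
    have hfy' : Measurable (Function.uncurry fun (a : ℝ) (v : Fin m → ℝ) =>
        f ((Fin.cons a v : Fin (m + 1) → ℝ), y)) :=
      hf.comp (measurable_fin_cons.prodMk measurable_const)
    rw [lintegral_pi_succ _ _ hfy]
    exact lintegral_lintegral_swap hfy'.aemeasurable
  set num : ℝ × (Fin m → ℝ × ℝ) → ℝ := fun z =>
    transfer m z.2 0 0 * z.1 + transfer m z.2 0 1 with hnum
  set den : ℝ × (Fin m → ℝ × ℝ) → ℝ := fun z =>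
    (transfer m z.2 1 0 + transfer m z.2 0 0) * z.1 + (transfer m z.2 1 1 + transfer m z.2 0 1)
    with hden
  set K : ℝ × (Fin m → ℝ × ℝ) → ENNReal := fun z =>
    if num z / den z < z.1 then
      ENNReal.ofReal ((1 - (den z ^ 2)⁻¹) * (z.1 - num z / den z)⁻¹ ^ 2) *
        f (Fin.cons (z.1 - num z / den z)⁻¹ fun i => (z.2 i).2, fun i => (z.2 i).1) else 0 with hK_def
  have htr : ∀ i j, Measurable fun z : ℝ × (Fin m → ℝ × ℝ) => transfer m z.2 i j := fun i j =>
    (measurable_transfer m i j).comp measurable_snd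
  have hnum_m : Measurable num := ((htr 0 0).mul measurable_fst).add (htr 0 1)
  have hden_m : Measurable den :=
    (((htr 1 0).add (htr 0 0)).mul measurable_fst).add ((htr 1 1).add (htr 0 1))
  have hx_m : Measurable fun z : ℝ × (Fin m → ℝ × ℝ) => (z.1 - num z / den z)⁻¹ := by fun_prop
  have hfx_m : Measurable fun z : ℝ × (Fin m → ℝ × ℝ) =>
      f (Fin.cons (z.1 - num z / den z)⁻¹ fun i => (z.2 i).2, fun i => (z.2 i).1) := by
    have h2 : Measurable fun z : ℝ × (Fin m → ℝ × ℝ) => fun i => (z.2 i).2 := by fun_prop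
    have h1 : Measurable fun z : ℝ × (Fin m → ℝ × ℝ) => fun i => (z.2 i).1 := by fun_prop
    exact hf.comp ((measurable_fin_cons.comp (hx_m.prodMk h2)).prodMk h1)
  have hK : Measurable K := by
    refine Measurable.ite (measurableSet_lt (by fun_prop) measurable_fst) ?_ measurable_const
    exact Measurable.mul (by fun_prop) hfx_m
  have e2 : ∀ᵐ q : Fin m → ℝ × ℝ ∂(Measure.pi fun _ => posVol.prod posVol),
      ∫⁻ x₀, f (Fin.cons x₀ fun i => (q i).2, fun i => (q i).1) ∂posVol =
        ∫⁻ w, K (w, q) ∂posVol := by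
    filter_upwards [ae_pi_posVol_pair m] with q hq
    obtain ⟨ha, hb, hc, hd⟩ := transfer_bounds m q hq
    have hdet := det_transfer m q
    rw [Matrix.det_fin_two] at hdet
    exact lintegral_posVol_sub_mobius (a := transfer m q 0 0) (b := transfer m q 0 1)
      (c := transfer m q 1 0 + transfer m q 0 0) (d := transfer m q 1 1 + transfer m q 0 1) hb
      (by linarith) (by linarith)
      (by linear_combination hdet)
      (fun x₀ => f (Fin.cons x₀ fun i => (q i).2, fun i => (q i).1))
  have hwt : Measurable fun z : ℝ × (Fin m → ℝ × ℝ) =>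
      ENNReal.ofReal (Real.exp (∑ i, (z.2 i).2) * ∏ i, (orbitWeights z.1 z.2 i).2 ^ 2) *
        K (z.1, orbitWeights z.1 z.2) := by
    have h1 : ∀ i, Measurable fun z : ℝ × (Fin m → ℝ × ℝ) => (orbitWeights z.1 z.2 i).2 :=
      fun i => (measurable_pi_iff.1 measurable_orbitWeights i).snd
    exact Measurable.mul (by fun_prop)
      (hK.comp (measurable_fst.prodMk measurable_orbitWeights))
  have e3 : ∀ᵐ w ∂posVol, ∫⁻ q, K (w, q) ∂(Measure.pi fun _ => posVol.prod posVol) =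
      ∫⁻ p : Fin m → ℝ × ℝ, ENNReal.ofReal (Real.exp (∑ i, (p i).2) *
        ∏ i, (orbitWeights w p i).2 ^ 2) * K (w, orbitWeights w p)
        ∂(Measure.pi fun _ => posVol.prod posVol) := by
    filter_upwards [ae_posVol] with w hw
    exact lintegral_orbitWeights hw (hK.comp measurable_prodMk_left)
  have hK' : Measurable (Function.uncurry fun (q : Fin m → ℝ × ℝ) (w : ℝ) => K (w, q)) :=
    hK.comp measurable_swap
  have hwt' : Measurable (Function.uncurry fun (w : ℝ) (p : Fin m → ℝ × ℝ) =>
      ENNReal.ofReal (Real.exp (∑ i, (p i).2) * ∏ i, (orbitWeights w p i).2 ^ 2) *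
        K (w, orbitWeights w p)) := hwt
  rw [e1, lintegral_congr_ae e2, lintegral_lintegral_swap hK'.aemeasurable,
    lintegral_congr_ae e3, lintegral_lintegral_swap hwt'.aemeasurable]
  refine lintegral_congr_ae ?_
  filter_upwards [ae_pi_posVol_pair m] with p hp
  rw [lintegral_posVol_exp_sub_one (Real.exp_pos (∑ i, (p i).1 - ∑ i, (p i).2))]
  refine lintegral_congr_ae ?_
  filter_upwards [ae_posVol] with τ hτ
  have hτ1 : 1 < Real.exp τ := Real.one_lt_exp_iff.2 hτ
  have hw0 : 0 < Real.exp (∑ i, (p i).1 - ∑ i, (p i).2) * (Real.exp τ - 1) :=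
    mul_pos (Real.exp_pos _) (by linarith)
  generalize hw : Real.exp (∑ i, (p i).1 - ∑ i, (p i).2) * (Real.exp τ - 1) = w at hw0
  obtain ⟨hN1, hN2⟩ := transfer_orbitWeights hw0 p fun i => (hp i).2
  set T := ∑ i, (p i).1 with hT
  set S := ∑ i, (p i).2 with hS
  have hwS : w * Real.exp S = Real.exp T * (Real.exp τ - 1) := by
    rw [← hw, Real.exp_sub]
    field_simp
  have hnum' : num (w, orbitWeights w p) = Real.exp T * (Real.exp τ - 1) := by
    rw [← hwS, ← hN1]
  have hden' : den (w, orbitWeights w p) = Real.exp (τ + T) := by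
    have : den (w, orbitWeights w p) = Real.exp T + w * Real.exp S := by
      rw [← hN1, ← hN2, hden]
      ring
    rw [this, hwS, Real.exp_add]
    ring
  have hu : num (w, orbitWeights w p) / den (w, orbitWeights w p) = 1 - (Real.exp τ)⁻¹ := by
    rw [hnum', hden', Real.exp_add]
    field_simp
  have hcond : 1 - (Real.exp τ)⁻¹ < w ↔ S < τ + T := by
    have h1 : w - (1 - (Real.exp τ)⁻¹) =
        (Real.exp τ - 1) * (Real.exp τ)⁻¹ * (Real.exp (τ + T - S) - 1) := by
      rw [← hw, add_sub_assoc, Real.exp_add]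
      field_simp
    have h2 : 0 < (Real.exp τ - 1) * (Real.exp τ)⁻¹ :=
      mul_pos (by linarith) (inv_pos.2 (Real.exp_pos _))
    rw [← sub_pos, h1, mul_pos_iff_of_pos_left h2, sub_pos, Real.one_lt_exp_iff, sub_pos]
  simp only [hK_def, hu]
  simp only [hden']
  by_cases hc : S < τ + T
  · have huw := hcond.2 hc
    rw [if_pos hc, if_pos huw]
    have hdet := det_wheelLap_orbitWeights hm p (fun i => (hp i).2) hτ hw.symm rfl huw
    have hfv : f (Fin.cons (w - (1 - (Real.exp τ)⁻¹))⁻¹ fun i => (orbitWeights w p i).2,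
        fun i => (orbitWeights w p i).1) = _ :=
      congrArg (fun D => ENNReal.ofReal (D⁻¹ ^ 2)) hdet
    rw [hfv]
    have hX : ∀ i, 0 < (orbitWeights w p i).2 := by
      intro i
      have h1 := Real.one_lt_exp_iff.2 (hp i).2
      exact div_pos (Real.exp_pos _) (mul_pos (orbit_pos hw0 p _) (by linarith))
    have hX' : 0 < ∏ i, (orbitWeights w p i).2 := Finset.prod_pos fun i _ => hX i
    have hTpos : 0 < τ + T := by
      have : 0 ≤ T := Finset.sum_nonneg fun i _ => (hp i).1.le
      linarith
    have hE : 1 < Real.exp (τ + T) := Real.one_lt_exp_iff.2 hTpos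
    have hE' : 0 ≤ 1 - (Real.exp (τ + T) ^ 2)⁻¹ := by
      have : (Real.exp (τ + T) ^ 2)⁻¹ ≤ 1 := inv_le_one_of_one_le₀ (by nlinarith)
      linarith
    rw [← ENNReal.ofReal_mul (by positivity), ← ENNReal.ofReal_mul (by positivity),
      ← ENNReal.ofReal_mul (by positivity)]
    congr 1
    rw [Finset.prod_pow, Real.exp_neg, Real.exp_sub]
    have hxx : (w - (1 - (Real.exp τ)⁻¹))⁻¹ ≠ 0 := inv_ne_zero (sub_pos.2 huw).ne'
    have hτT : Real.exp τ = Real.exp (τ + T) / Real.exp T := by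
      rw [← Real.exp_sub]; congr 1; ring
    generalize (w - (1 - (Real.exp τ)⁻¹))⁻¹ = X0 at *
    rw [hτT]
    generalize Real.exp (τ + T) = E at *
    generalize ∏ i, (orbitWeights w p i).2 = X at *
    have hT0 := (Real.exp_pos T).ne'
    have hS0 := (Real.exp_pos S).ne'
    generalize Real.exp T = T' at *
    generalize Real.exp S = S' at *
    have hE0 : E - 1 ≠ 0 := by linarith
    have hE1 : E ≠ 0 := by linarith
    have hX0 := hX'.ne'
    have e1 : 1 - E⁻¹ = (E - 1) / E := by field_simp
    have e2 : 1 - (E ^ 2)⁻¹ = (E - 1) * (E + 1) / E ^ 2 := by field_simp; ring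
    rw [e1, e2]
    field_simp
  · rw [if_neg hc, if_neg (fun h => hc (hcond.1 h))]
    simp

lemma lintegral_wheel_gap {k : ℕ} {G : ℝ → ENNReal} (hG : Measurable G) :
    ∫⁻ p : Fin (k + 1) → ℝ × ℝ, ∫⁻ τ, (if ∑ i, (p i).2 < τ + ∑ i, (p i).1 then
        G (τ + ∑ i, (p i).1) else 0) ∂posVol ∂(Measure.pi fun _ => posVol.prod posVol) =
      ∫⁻ σ, ENNReal.ofReal (σ ^ (k + 1) / (k + 1).factorial) *
        (ENNReal.ofReal (σ ^ (k + 1) / (k + 1).factorial) * G σ) ∂posVol := by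
  set F : ((Fin (k + 1) → ℝ) × (Fin (k + 1) → ℝ)) × ℝ → ENNReal := fun z =>
    if ∑ i, z.1.2 i < z.2 + ∑ i, z.1.1 i then G (z.2 + ∑ i, z.1.1 i) else 0 with hF_def
  have hF : Measurable F :=
    Measurable.ite (measurableSet_lt (by fun_prop) (by fun_prop)) (by fun_prop) measurable_const
  have hF' : Measurable fun z : (Fin (k + 1) → ℝ) × (Fin (k + 1) → ℝ) =>
      ∫⁻ τ, F (z, τ) ∂posVol := hF.lintegral_prod_right'
  have hs : ∀ t : Fin (k + 1) → ℝ, Measurable (Function.uncurry fun s τ => F ((t, s), τ)) :=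
    fun t => hF.comp ((measurable_const.prodMk measurable_fst).prodMk measurable_snd)
  set h : ℝ → ENNReal := fun σ => ENNReal.ofReal (σ ^ (k + 1) / (k + 1).factorial) * G σ with hh_def
  have hh : Measurable h := by fun_prop
  have inner : ∀ r : ℝ, 0 < r → ∫⁻ s : Fin (k + 1) → ℝ, (if ∑ i, s i < r then G r else 0)
      ∂(Measure.pi fun _ => posVol) = h r := by
    intro r hr
    rw [lintegral_pi_sum k (h := fun σ => if σ < r then G r else 0)
      (Measurable.ite measurableSet_Iio measurable_const measurable_const)]
    rw [hh_def]
    simp only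
    rw [← lintegral_pow_lt k hr, ← lintegral_mul_const]
    · refine lintegral_congr fun σ => ?_
      split_ifs <;> simp
    · exact Measurable.ite measurableSet_Iio (by fun_prop) measurable_const
  have hpos : ∀ᵐ t : Fin (k + 1) → ℝ ∂(Measure.pi fun _ => posVol), ∀ i, 0 < t i :=
    Filter.eventually_all.2 fun i =>
      (Measure.tendsto_eval_ae_ae (μ := fun _ : Fin (k + 1) => posVol) (i := i)).eventually ae_posVol
  have hadd : Measurable (Function.uncurry fun (t : Fin (k + 1) → ℝ) (τ : ℝ) => h (τ + ∑ i, t i)) :=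
    hh.comp (by fun_prop)
  calc _ = ∫⁻ z, ∫⁻ τ, F (z, τ) ∂posVol
          ∂((Measure.pi fun _ => posVol).prod (Measure.pi fun _ => posVol)) := lintegral_pi_pair hF'
    _ = ∫⁻ t : Fin (k + 1) → ℝ, ∫⁻ τ, h (τ + ∑ i, t i) ∂posVol ∂(Measure.pi fun _ => posVol) := by
        rw [lintegral_prod _ hF'.aemeasurable]
        refine lintegral_congr_ae ?_
        filter_upwards [hpos] with t ht
        rw [lintegral_lintegral_swap (hs t).aemeasurable]
        refine lintegral_congr_ae ?_
        filter_upwards [ae_posVol] with τ hτ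
        exact inner _ (add_pos_of_pos_of_nonneg hτ (Finset.sum_nonneg fun i _ => (ht i).le))
    _ = ∫⁻ v : Fin (k + 1 + 1) → ℝ, h (∑ i, v i) ∂(Measure.pi fun _ => posVol) := by
        rw [lintegral_lintegral_swap hadd.aemeasurable, lintegral_pi_succ _ _ (by fun_prop)]
        simp only [Fin.sum_univ_succ (n := k + 1), Fin.cons_zero, Fin.cons_succ]
    _ = _ := lintegral_pi_sum (k + 1) hh

lemma hasSum_sq_mul_geometric {x : ℝ} (hx0 : 0 ≤ x) (hx1 : x < 1) :
    HasSum (fun n : ℕ => ((n : ℝ) + 1) ^ 2 * x ^ (n + 1)) (x * (1 + x) / (1 - x) ^ 3) := by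
  have hx : ‖x‖ < 1 := by rwa [Real.norm_of_nonneg hx0]
  have h2 := (hasSum_choose_mul_geometric_of_norm_lt_one 2 hx).mul_left 2
  have h1 := hasSum_choose_mul_geometric_of_norm_lt_one 1 hx
  have hterm : ∀ n : ℕ, ((n : ℝ) + 1) ^ 2 * x ^ (n + 1) =
      x * (2 * (((n + 2).choose 2 : ℕ) * x ^ n) - ((n + 1).choose 1 : ℕ) * x ^ n) := by
    intro n
    rw [Nat.cast_choose_two, Nat.choose_one_right]
    push_cast
    ring
  have hval : x * (1 + x) / (1 - x) ^ 3 =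
      x * (2 * (1 / (1 - x) ^ (2 + 1)) - 1 / (1 - x) ^ (1 + 1)) := by
    have : 1 - x ≠ 0 := by linarith
    field_simp
    ring
  simp_rw [hterm, hval]
  exact (h2.sub h1).mul_left x

lemma lintegral_pow_mul_exp (k : ℕ) {b : ℝ} (hb : 0 < b) :
    ∫⁻ σ, ENNReal.ofReal (σ ^ k * Real.exp (-(b * σ))) ∂posVol =
      ENNReal.ofReal (k.factorial / b ^ (k + 1)) := by
  have h := Real.integral_rpow_mul_exp_neg_mul_Ioi (a := k + 1) (by positivity) hb
  simp only [add_sub_cancel_right, Real.rpow_natCast, Real.Gamma_nat_eq_factorial] at h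
  have hv : (1 / b) ^ ((k : ℝ) + 1) * k.factorial = k.factorial / b ^ (k + 1) := by
    rw [← Nat.cast_add_one, Real.rpow_natCast, one_div, inv_pow]
    ring
  rw [hv] at h
  rw [← h, ofReal_integral_eq_lintegral_ofReal]
  · refine Integrable.of_integral_ne_zero ?_
    rw [h]
    positivity
  · filter_upwards [ae_posVol] with σ hσ
    positivity

lemma lintegral_pow_mul_sum {m : ℕ} (hm : 2 ≤ m) :
    ∫⁻ σ, ENNReal.ofReal (σ ^ m / m.factorial) * (ENNReal.ofReal (σ ^ m / m.factorial) *
        ENNReal.ofReal (Real.exp (-σ) * (1 + Real.exp (-σ)) / (1 - Real.exp (-σ)) ^ 3)) ∂posVol =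
      ENNReal.ofReal ((Nat.choose (2 * m) m : ℝ) * ∑' n : ℕ, 1 / ((n : ℝ) + 1) ^ (2 * m - 1)) := by
  have hC : (Nat.choose (2 * m) m : ℝ) = (2 * m).factorial / (m.factorial : ℝ) ^ 2 := by
    rw [Nat.cast_choose ℝ (by lia), show 2 * m - m = m by lia, sq]
  have e1 : ∀ᵐ σ ∂posVol, ENNReal.ofReal (σ ^ m / m.factorial) *
      (ENNReal.ofReal (σ ^ m / m.factorial) *
        ENNReal.ofReal (Real.exp (-σ) * (1 + Real.exp (-σ)) / (1 - Real.exp (-σ)) ^ 3)) =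
      ∑' n : ℕ, ENNReal.ofReal (((n : ℝ) + 1) ^ 2 / (m.factorial : ℝ) ^ 2) *
        ENNReal.ofReal (σ ^ (2 * m) * Real.exp (-(((n : ℝ) + 1) * σ))) := by
    filter_upwards [ae_posVol] with σ hσ
    have hs := hasSum_sq_mul_geometric (Real.exp_pos (-σ)).le
      (Real.exp_lt_one_iff.2 (by simpa using hσ))
    have hpos : ∀ n : ℕ, 0 ≤ ((n : ℝ) + 1) ^ 2 * Real.exp (-σ) ^ (n + 1) := fun n => by positivity
    rw [← hs.tsum_eq, ENNReal.ofReal_tsum_of_nonneg hpos hs.summable, ← ENNReal.tsum_mul_left,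
      ← ENNReal.tsum_mul_left]
    congr 1
    ext n
    rw [← ENNReal.ofReal_mul (by positivity), ← ENNReal.ofReal_mul (by positivity),
      ← ENNReal.ofReal_mul (by positivity), ← Real.exp_nat_mul]
    congr 1
    rw [show ((n + 1 : ℕ) : ℝ) * -σ = -(((n : ℝ) + 1) * σ) by push_cast; ring]
    field_simp
    ring
  have hsum : Summable fun n : ℕ => 1 / ((n : ℝ) + 1) ^ (2 * m - 1) := by
    have := (summable_nat_add_iff 1).2
      (Real.summable_one_div_nat_pow.2 (show 1 < 2 * m - 1 by lia))
    simpa using this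
  rw [lintegral_congr_ae e1, lintegral_tsum fun n => by fun_prop, ← tsum_mul_left,
    ENNReal.ofReal_tsum_of_nonneg (fun n => by positivity) (hsum.mul_left _)]
  congr 1
  ext n
  rw [lintegral_const_mul _ (by fun_prop), lintegral_pow_mul_exp _ (by positivity),
    ← ENNReal.ofReal_mul (by positivity), hC]
  congr 1
  obtain ⟨j, rfl⟩ : ∃ j, m = j + 1 := ⟨m - 1, by lia⟩
  rw [show 2 * (j + 1) - 1 = 2 * j + 1 by lia]
  field_simp
  ring

lemma volume_restrict_pos (g n : ℕ) :
    (volume : Measure ((Fin g → ℝ) × (Fin n → ℝ))).restrict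
        {p | (∀ i, 0 < p.1 i) ∧ ∀ j, 0 < p.2 j} =
      (Measure.pi fun _ => posVol).prod (Measure.pi fun _ => posVol) := by
  have hset : {p : (Fin g → ℝ) × (Fin n → ℝ) | (∀ i, 0 < p.1 i) ∧ ∀ j, 0 < p.2 j} =
      (Set.univ.pi fun _ => Set.Ioi 0) ×ˢ (Set.univ.pi fun _ => Set.Ioi 0) := by
    ext p
    simp [Set.mem_pi]
  rw [hset, Measure.volume_eq_prod, ← Measure.prod_restrict, volume_pi, volume_pi,
    Measure.restrict_pi_pi, Measure.restrict_pi_pi]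

/-- The Feynman residue of the wheel graph with `g` spokes is finite and equals
`binomial(2(g−1), g−1) · ζ(2g−3)`. -/
theorem feynmanResidue_wheel (g : ℕ) (hg : 3 ≤ g) :
    IntegrableOn
      (fun p : (Fin g → ℝ) × (Fin (g - 1) → ℝ) =>
        ((wheelLap g p.1 (extendOne g p.2)).det)⁻¹ ^ 2)
      {p | (∀ i, 0 < p.1 i) ∧ ∀ j, 0 < p.2 j} ∧
    ∫ p in {p : (Fin g → ℝ) × (Fin (g - 1) → ℝ) |
        (∀ i, 0 < p.1 i) ∧ ∀ j, 0 < p.2 j},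
        ((wheelLap g p.1 (extendOne g p.2)).det)⁻¹ ^ 2 =
      (Nat.choose (2 * (g - 1)) (g - 1) : ℝ) *
        ∑' n : ℕ, 1 / ((n : ℝ) + 1) ^ (2 * g - 3) := by
  obtain ⟨k, rfl⟩ : ∃ k, g = k + 1 + 1 := ⟨g - 2, by lia⟩
  have hm : 2 ≤ k + 1 := by lia
  rw [IntegrableOn, volume_restrict_pos]
  have hmeas : Measurable fun p : (Fin (k + 1 + 1) → ℝ) × (Fin (k + 1 + 1 - 1) → ℝ) =>
      ((wheelLap (k + 1 + 1) p.1 (extendOne (k + 1 + 1) p.2)).det)⁻¹ ^ 2 :=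
    (measurable_det_wheelLap _).inv.pow_const 2
  have hval : ∫⁻ p : (Fin (k + 1 + 1) → ℝ) × (Fin (k + 1 + 1 - 1) → ℝ),
      ENNReal.ofReal (((wheelLap (k + 1 + 1) p.1 (extendOne (k + 1 + 1) p.2)).det)⁻¹ ^ 2)
        ∂((Measure.pi fun _ => posVol).prod (Measure.pi fun _ => posVol)) = _ :=
    (lintegral_wheel hm).trans
      ((lintegral_wheel_gap (G := fun σ => ENNReal.ofReal
        (Real.exp (-σ) * (1 + Real.exp (-σ)) / (1 - Real.exp (-σ)) ^ 3)) (by fun_prop)).trans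
        (lintegral_pow_mul_sum hm))
  have hnn : ∀ p : (Fin (k + 1 + 1) → ℝ) × (Fin (k + 1 + 1 - 1) → ℝ),
      0 ≤ ((wheelLap (k + 1 + 1) p.1 (extendOne (k + 1 + 1) p.2)).det)⁻¹ ^ 2 :=
    fun p => sq_nonneg _
  constructor
  · refine ⟨hmeas.aestronglyMeasurable, ?_⟩
    rw [hasFiniteIntegral_iff_ofReal (Filter.Eventually.of_forall hnn), hval]
    exact ENNReal.ofReal_lt_top
  · rw [integral_eq_lintegral_of_nonneg_ae (Filter.Eventually.of_forall hnn)
      hmeas.aestronglyMeasurable, hval, ENNReal.toReal_ofReal]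
    · rw [show 2 * (k + 1 + 1) - 3 = 2 * (k + 1) - 1 by lia, Nat.add_sub_cancel]
    · exact mul_nonneg (Nat.cast_nonneg _) (tsum_nonneg fun n => by positivity)
end
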